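/- Let L = 2π. There exists δ₁ > 0 such that for every initial datum y₀ ∈ L²(0,L) with ‖y₀‖_{L²(0,L)} < δ₁ and every classical solution y of the nonlinear KdV system on [0,∞) with y(0,·) = y₀, one has ‖y(t,·)‖_{L²(0,L)} → 0 as t → +∞. -/

import Mathlib

open Set Real MeasureTheory Filter

/-- The `L²(0,L)` norm of a function on `(0,L)`. -/
noncomputable def L2norm (L : ℝ) (f : ℝ → ℝ) : ℝ :=
  Real.sqrt (∫ x in (0:ℝ)..L, (f x) ^ 2)

/-- A classical solution of the nonlinear KdV system
`y_t + y_x + y y_x + y_xxx = 0`, `y(t,0) = y(t,L) = y_x(t,L) = 0`, on `[0,∞) × [0,L]`. -/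
def IsNonlinearKdVSolIci (L : ℝ) (y : ℝ → ℝ → ℝ) : Prop :=
  (∀ t ∈ Ici (0:ℝ), ContDiffOn ℝ 3 (y t) (Icc (0:ℝ) L)) ∧
  (∀ x ∈ Icc (0:ℝ) L, ContDiffOn ℝ 1 (fun s => y s x) (Ici (0:ℝ))) ∧
  ContinuousOn (fun p : ℝ × ℝ => y p.1 p.2) (Ici (0:ℝ) ×ˢ Icc (0:ℝ) L) ∧
  (∀ t ∈ Ioi (0:ℝ), ∀ x ∈ Ioo (0:ℝ) L,
    derivWithin (fun s => y s x) (Ici (0:ℝ)) t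
      + derivWithin (y t) (Icc (0:ℝ) L) x
      + y t x * derivWithin (y t) (Icc (0:ℝ) L) x
      + iteratedDerivWithin 3 (y t) (Icc (0:ℝ) L) x = 0) ∧
  (∀ t ∈ Ici (0:ℝ),
    y t 0 = 0 ∧ y t L = 0 ∧ derivWithin (y t) (Icc (0:ℝ) L) L = 0)

/-- Fubini plus the fundamental theorem of calculus for a separately continuous derivative. -/
lemma fub {f g : ℝ → ℝ → ℝ} {t1 t2 L C : ℝ} (ht : t1 ≤ t2) (hL : 0 ≤ L)
    (hgt : ∀ x ∈ Ioo 0 L, ContinuousOn (fun s => g s x) (Icc t1 t2))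
    (hgx : ∀ s ∈ Icc t1 t2, ContinuousOn (g s) (Icc 0 L))
    (hd : ∀ x ∈ Ioo 0 L, ∀ s ∈ Icc t1 t2, HasDerivAt (fun s => f s x) (g s x) s)
    (hC : ∀ s ∈ Icc t1 t2, ∫ x in (0:ℝ)..L, |g s x| ≤ C)
    (hf : ∀ s ∈ Icc t1 t2, ContinuousOn (f s) (Icc 0 L)) :
    IntervalIntegrable (fun s => ∫ x in (0:ℝ)..L, g s x) volume t1 t2 ∧
    (∫ x in (0:ℝ)..L, f t2 x) - (∫ x in (0:ℝ)..L, f t1 x)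
      = ∫ s in t1..t2, ∫ x in (0:ℝ)..L, g s x := by
  classical
  have hI : ∀ h : ℝ → ℝ, ∫ x in (0:ℝ)..L, h x = ∫ x in Ioo 0 L, h x := fun h => by
    rw [intervalIntegral.integral_of_le hL, integral_Ioc_eq_integral_Ioo]
  let G : ℝ → ℝ → ℝ := fun s x => if x ∈ Ioo 0 L then g (projIcc t1 t2 ht s) x else 0
  have hGm : Measurable (Function.uncurry G) := by
    apply measurable_uncurry_of_continuous_of_measurable
    · intro x
      by_cases hx : x ∈ Ioo 0 L
      · simp only [G, hx, if_true]
        exact (hgt x hx).comp_continuous (continuous_subtype_val.comp continuous_projIcc)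
          (fun s => (projIcc t1 t2 ht s).2)
      · simp only [G, hx, if_false]; exact continuous_const
    · intro s
      have h1 : Measurable ((Ioo 0 L).piecewise (g (projIcc t1 t2 ht s)) (fun _ => 0)) := by
        apply ContinuousOn.measurable_piecewise _ continuousOn_const measurableSet_Ioo
        exact (hgx _ (projIcc t1 t2 ht s).2).mono Ioo_subset_Icc_self
      have h2 : G s = (Ioo 0 L).piecewise (g (projIcc t1 t2 ht s)) (fun _ => 0) := by
        ext x
        simp only [G, Set.piecewise]
      rw [h2]; exact h1
  have hGe : ∀ s ∈ Icc t1 t2, ∀ x ∈ Ioo 0 L, G s x = g s x := by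
    intro s hs x hx
    simp only [G, hx, if_true, projIcc_of_mem ht hs]
  have hint : ∀ s ∈ Icc t1 t2, Integrable (G s) (volume.restrict (Ioo 0 L)) := by
    intro s hs
    have h1 : IntegrableOn (g s) (Ioo 0 L) :=
      ((hgx s hs).integrableOn_Icc).mono_set Ioo_subset_Icc_self
    exact (integrableOn_congr_fun (hGe s hs) measurableSet_Ioo).2 h1
  have hGint : Integrable (Function.uncurry G)
      ((volume.restrict (Ioc t1 t2)).prod (volume.restrict (Ioo 0 L))) := by
    rw [integrable_prod_iff hGm.aestronglyMeasurable]
    constructor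
    · filter_upwards [ae_restrict_mem measurableSet_Ioc] with s hs
      exact hint s (Ioc_subset_Icc_self hs)
    · refine Measure.integrableOn_of_bounded (M := C) (by simp) ?_ ?_
      · exact (hGm.norm.stronglyMeasurable.integral_prod_right').aestronglyMeasurable
      · filter_upwards [ae_restrict_mem measurableSet_Ioc] with s hs
        have hs' := Ioc_subset_Icc_self hs
        rw [Real.norm_of_nonneg (integral_nonneg (fun _ => norm_nonneg _))]
        refine le_trans (le_of_eq ?_) (hC s hs')
        rw [hI]
        apply setIntegral_congr_fun measurableSet_Ioo
        intro x hx
        simp [Function.uncurry, hGe s hs' x hx]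
  have hinner : ∀ s ∈ Icc t1 t2, ∫ x in Ioo 0 L, G s x = ∫ x in (0:ℝ)..L, g s x := by
    intro s hs
    rw [hI]
    exact setIntegral_congr_fun measurableSet_Ioo (hGe s hs)
  constructor
  · rw [intervalIntegrable_iff_integrableOn_Ioc_of_le ht]
    have := hGint.integral_prod_left
    refine (integrableOn_congr_fun ?_ measurableSet_Ioc).1 this
    intro s hs
    exact hinner s (Ioc_subset_Icc_self hs)
  · have hswap := integral_integral_swap hGint
    rw [intervalIntegral.integral_of_le ht]
    have e1 : ∫ s in Ioc t1 t2, ∫ x in (0:ℝ)..L, g s x = ∫ s in Ioc t1 t2, ∫ x in Ioo 0 L, G s x :=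
      setIntegral_congr_fun measurableSet_Ioc
        (fun s hs => (hinner s (Ioc_subset_Icc_self hs)).symm)
    rw [e1, hswap, hI, hI, ← integral_sub]
    · apply setIntegral_congr_fun measurableSet_Ioo
      intro x hx
      have h2 : ∫ s in t1..t2, g s x = f t2 x - f t1 x := by
        apply intervalIntegral.integral_eq_sub_of_hasDerivAt
        · intro s hs
          rw [uIcc_of_le ht] at hs
          exact hd x hx s hs
        · exact (hgt x hx).intervalIntegrable_of_Icc ht
      change f t2 x - f t1 x = _
      rw [← h2, intervalIntegral.integral_of_le ht]
      apply setIntegral_congr_fun measurableSet_Ioc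
      intro s hs
      exact (hGe s (Ioc_subset_Icc_self hs) x hx).symm
    · exact ((hf t2 ⟨ht, le_rfl⟩).integrableOn_Icc).mono_set Ioo_subset_Icc_self
    · exact ((hf t1 ⟨le_rfl, ht⟩).integrableOn_Icc).mono_set Ioo_subset_Icc_self

lemma fub_le {f g : ℝ → ℝ → ℝ} {t1 t2 L C c : ℝ} (ht : t1 ≤ t2) (hL : 0 ≤ L)
    (hgt : ∀ x ∈ Ioo 0 L, ContinuousOn (fun s => g s x) (Icc t1 t2))
    (hgx : ∀ s ∈ Icc t1 t2, ContinuousOn (g s) (Icc 0 L))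
    (hd : ∀ x ∈ Ioo 0 L, ∀ s ∈ Icc t1 t2, HasDerivAt (fun s => f s x) (g s x) s)
    (hC : ∀ s ∈ Icc t1 t2, ∫ x in (0:ℝ)..L, |g s x| ≤ C)
    (hf : ∀ s ∈ Icc t1 t2, ContinuousOn (f s) (Icc 0 L))
    (hc : ∀ s ∈ Icc t1 t2, ∫ x in (0:ℝ)..L, g s x ≤ c) :
    (∫ x in (0:ℝ)..L, f t2 x) - (∫ x in (0:ℝ)..L, f t1 x) ≤ c * (t2 - t1) := by
  obtain ⟨h1, h2⟩ := fub ht hL hgt hgx hd hC hf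
  rw [h2]
  calc _ ≤ ∫ s in t1..t2, c := intervalIntegral.integral_mono_on ht h1 (by simp) hc
    _ = _ := by simp [mul_comm]

/-- Integrate a pointwise bound by an exact derivative plus a remainder. -/
lemma flux_le {I F F' R : ℝ → ℝ} {L : ℝ} (hL : 0 ≤ L) (hI : ContinuousOn I (Icc 0 L))
    (hF : ContinuousOn F (Icc 0 L)) (hF' : ContinuousOn F' (Icc 0 L))
    (hR : ContinuousOn R (Icc 0 L)) (hd : ∀ x ∈ Ioo 0 L, HasDerivAt F (F' x) x)
    (h : ∀ x ∈ Icc 0 L, I x ≤ F' x + R x) :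
    ∫ x in (0:ℝ)..L, I x ≤ F L - F 0 + ∫ x in (0:ℝ)..L, R x := by
  rw [← intervalIntegral.integral_eq_sub_of_hasDerivAt_of_le hL hF hd
    (hF'.intervalIntegrable_of_Icc hL), ← intervalIntegral.integral_add
    (hF'.intervalIntegrable_of_Icc hL) (hR.intervalIntegrable_of_Icc hL)]
  exact intervalIntegral.integral_mono_on hL (hI.intervalIntegrable_of_Icc hL)
    ((hF'.intervalIntegrable_of_Icc hL).add (hR.intervalIntegrable_of_Icc hL)) h

lemma flux_eq {I F F' R : ℝ → ℝ} {L : ℝ} (hL : 0 ≤ L)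
    (hF : ContinuousOn F (Icc 0 L)) (hF' : ContinuousOn F' (Icc 0 L))
    (hR : ContinuousOn R (Icc 0 L)) (hd : ∀ x ∈ Ioo 0 L, HasDerivAt F (F' x) x)
    (h : ∀ x ∈ Icc 0 L, I x = F' x + R x) :
    ∫ x in (0:ℝ)..L, I x = F L - F 0 + ∫ x in (0:ℝ)..L, R x := by
  rw [← intervalIntegral.integral_eq_sub_of_hasDerivAt_of_le hL hF hd
    (hF'.intervalIntegrable_of_Icc hL), ← intervalIntegral.integral_add
    (hF'.intervalIntegrable_of_Icc hL) (hR.intervalIntegrable_of_Icc hL)]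
  apply intervalIntegral.integral_congr
  intro x hx
  rw [uIcc_of_le hL] at hx
  exact h x hx

/-- A spatial profile: `C³` on `[0,L]` with the KdV boundary conditions. -/
structure Prof (L : ℝ) (f f1 f2 f3 : ℝ → ℝ) : Prop where
  c0 : ContinuousOn f (Icc 0 L)
  c1 : ContinuousOn f1 (Icc 0 L)
  c2 : ContinuousOn f2 (Icc 0 L)
  c3 : ContinuousOn f3 (Icc 0 L)
  d0 : ∀ x ∈ Ioo 0 L, HasDerivAt f (f1 x) x
  d1 : ∀ x ∈ Ioo 0 L, HasDerivAt f1 (f2 x) x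
  d2 : ∀ x ∈ Ioo 0 L, HasDerivAt f2 (f3 x) x
  b0 : f 0 = 0
  bL : f L = 0
  b1 : f1 L = 0

lemma energy_spatial {L : ℝ} {f f1 f2 f3 : ℝ → ℝ} (hL : 0 ≤ L) (p : Prof L f f1 f2 f3) :
    ∫ x in (0:ℝ)..L, 2 * f x * (-(f1 x + f x * f1 x + f3 x)) = -(f1 0) ^ 2 := by
  have hc0 := p.c0
  have hc1 := p.c1
  have hc2 := p.c2
  have hc3 := p.c3
  rw [flux_eq (F := fun x => -(f x) ^ 2 - 2 / 3 * (f x) ^ 3 - 2 * (f x * f2 x) + (f1 x) ^ 2)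
    (F' := fun x => 2 * f x * (-(f1 x + f x * f1 x + f3 x))) (R := fun _ => 0) hL]
  · simp [p.b0, p.bL, p.b1]
  · fun_prop
  · fun_prop
  · fun_prop
  · intro x hx
    have h0 := p.d0 x hx
    have h1 := p.d1 x hx
    have h2 := p.d2 x hx
    refine HasDerivAt.congr_deriv ((((h0.pow 2).neg.sub ((h0.pow 3).const_mul (2/3))).sub
      ((h0.mul h2).const_mul 2)).add (h1.pow 2)) ?_
    push_cast
    ring
  · intro x hx; ring

lemma diff_spatial {L Y : ℝ} {f f1 f2 f3 g g1 g2 g3 : ℝ → ℝ} (hL : 0 ≤ L) (hL8 : L ≤ 7)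
    (p : Prof L f f1 f2 f3) (q : Prof L g g1 g2 g3) (hY0 : 0 ≤ Y)
    (hf : ∀ x ∈ Icc 0 L, |f x| ≤ Y) (hg : ∀ x ∈ Icc 0 L, |g x| ≤ Y) :
    ∫ x in (0:ℝ)..L, 2 * (1 + x) * (f x - g x) *
      (-(f1 x + f x * f1 x + f3 x) - -(g1 x + g x * g1 x + g3 x))
      ≤ (1 + 2 * Y + 64 * Y ^ 2) * ∫ x in (0:ℝ)..L, (1 + x) * (f x - g x) ^ 2 := by
  have hc0 := p.c0
  have hc1 := p.c1
  have hc2 := p.c2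
  have hc3 := p.c3
  have hc0' := q.c0
  have hc1' := q.c1
  have hc2' := q.c2
  have hc3' := q.c3
  rw [← intervalIntegral.integral_const_mul]
  refine (flux_le (F := fun x => -2 * ((1 + x) * ((f x - g x) * (f2 x - g2 x)))
        + 2 * ((f x - g x) * (f1 x - g1 x)) + (1 + x) * (f1 x - g1 x) ^ 2
        - (1 + x) * (f x - g x) ^ 2 - (1 + x) * ((f x + g x) * (f x - g x) ^ 2))
    (F' := fun x => -2 * ((f x - g x) * (f2 x - g2 x) + (1 + x) * ((f1 x - g1 x) * (f2 x - g2 x)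
         + (f x - g x) * (f3 x - g3 x)))
        + 2 * ((f1 x - g1 x) ^ 2 + (f x - g x) * (f2 x - g2 x)) + ((f1 x - g1 x) ^ 2
        + (1 + x) * (2 * (f1 x - g1 x) * (f2 x - g2 x)))
        - ((f x - g x) ^ 2 + (1 + x) * (2 * (f x - g x) * (f1 x - g1 x)))
        - ((f x + g x) * (f x - g x) ^ 2 + (1 + x) * ((f1 x + g1 x) * (f x - g x) ^ 2
           + (f x + g x) * (2 * (f x - g x) * (f1 x - g1 x)))))
    (R := fun x => (1 + 2 * Y + 64 * Y ^ 2) * ((1 + x) * (f x - g x) ^ 2)) hL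
     ?_ ?_ ?_ ?_ ?_ ?_).trans ?_
  · fun_prop
  · fun_prop
  · fun_prop
  · fun_prop
  · intro x hx
    have h0 := (p.d0 x hx).sub (q.d0 x hx)
    have h0' := (p.d0 x hx).add (q.d0 x hx)
    have h1 := (p.d1 x hx).sub (q.d1 x hx)
    have h2 := (p.d2 x hx).sub (q.d2 x hx)
    have hr : HasDerivAt (fun x : ℝ => 1 + x) 1 x := by
      simpa using (hasDerivAt_id x).const_add 1
    refine HasDerivAt.congr_deriv ((((((hr.mul (h0.mul h2)).const_mul (-2)).add ((h0.mul h1).const_mul 2)).add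
      (hr.mul (h1.pow 2))).sub (hr.mul (h0.pow 2))).sub (hr.mul (h0'.mul (h0.pow 2)))) ?_
    simp only [Pi.sub_apply, Pi.add_apply, Pi.mul_apply, Pi.pow_apply]
    push_cast
    ring
  · intro x hx
    have a1 := abs_le.1 (hf x hx)
    have a2 := abs_le.1 (hg x hx)
    have hx0 := hx.1
    have hx7 : x ≤ 7 := hx.2.trans hL8
    set d := f x - g x with hdd
    set d' := f1 x - g1 x with hdd'
    set S := f x + g x with hS
    have hS1 : |S| ≤ 2 * Y := by rw [abs_le]; constructor <;> linarith
    -- remainder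
    have key : (d ^ 2 - 3 * d' ^ 2) + (d + (1 + x) * d') * (S * d)
        ≤ (1 + 2 * Y + 64 * Y ^ 2) * ((1 + x) * d ^ 2) := by
      have b1 : S * d ^ 2 ≤ 2 * Y * d ^ 2 :=
        mul_le_mul_of_nonneg_right ((le_abs_self S).trans hS1) (sq_nonneg d)
      have b2 : (1 + x) * d' * (S * d) ≤ 3 * d' ^ 2 + ((1 + x) * S * d) ^ 2 / 12 := by
        nlinarith [sq_nonneg (6 * d' - (1 + x) * S * d)]
      have b3 : S ^ 2 ≤ 4 * Y ^ 2 := by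
        have := sq_le_sq' (neg_le_of_abs_le hS1) ((le_abs_self S).trans hS1)
        nlinarith
      have b4 : ((1 + x) * S * d) ^ 2 ≤ 8 * (1 + x) * (4 * Y ^ 2) * d ^ 2 := by
        have e : ((1 + x) * S * d) ^ 2 = (1 + x) * (1 + x) * S ^ 2 * d ^ 2 := by ring
        rw [e]
        have : (1 + x) * (1 + x) ≤ 8 * (1 + x) := by nlinarith
        gcongr
      have b5 : 0 ≤ x * d ^ 2 := by positivity
      have b6 : 0 ≤ Y * (x * d ^ 2) := by positivity
      have b7 : 0 ≤ (1 + x) * Y ^ 2 * d ^ 2 := by positivity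
      nlinarith
    have e1 : f x = (S + d) / 2 := by rw [hS, hdd]; ring
    have e2 : g x = (S - d) / 2 := by rw [hS, hdd]; ring
    have e3 : f1 x = d' + g1 x := by rw [hdd']; ring
    rw [e3]
    rw [e1, e2]
    linarith
  · simp [p.b0, p.bL, p.b1, q.b0, q.bL, q.b1]
    positivity

lemma bdd_of_cont {a b L : ℝ} {f : ℝ → ℝ → ℝ}
    (jc : ContinuousOn (fun p : ℝ × ℝ => f p.1 p.2) (Icc a b ×ˢ Icc 0 L)) :
    ∃ Y, 0 ≤ Y ∧ ∀ s ∈ Icc a b, ∀ x ∈ Icc 0 L, |f s x| ≤ Y := by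
  obtain ⟨Y, hY⟩ := (isCompact_Icc.prod isCompact_Icc).exists_bound_of_continuousOn jc
  refine ⟨max Y 0, le_max_right _ _, fun s hs x hx => ?_⟩
  exact (hY (s, x) ⟨hs, hx⟩).trans (le_max_left _ _)

lemma slice_cont {S : Set ℝ} {L : ℝ} {f : ℝ → ℝ → ℝ}
    (jc : ContinuousOn (fun p : ℝ × ℝ => f p.1 p.2) (S ×ˢ Icc 0 L)) {s : ℝ} (hs : s ∈ S) :
    ContinuousOn (f s) (Icc 0 L) :=
  jc.comp (f := fun x => (s, x)) (by fun_prop) (fun x hx => ⟨hs, hx⟩)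

lemma slice_cont' {S : Set ℝ} {L : ℝ} {f : ℝ → ℝ → ℝ}
    (jc : ContinuousOn (fun p : ℝ × ℝ => f p.1 p.2) (S ×ˢ Icc 0 L)) {x : ℝ} (hx : x ∈ Icc 0 L) :
    ContinuousOn (fun s => f s x) S :=
  jc.comp (f := fun s => (s, x)) (by fun_prop) (fun s hs => ⟨hs, hx⟩)

lemma cont_int {a b L : ℝ} {f : ℝ → ℝ → ℝ} (hL : 0 ≤ L)
    (jc : ContinuousOn (fun p : ℝ × ℝ => f p.1 p.2) (Icc a b ×ˢ Icc 0 L)) :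
    ContinuousOn (fun s => ∫ x in (0:ℝ)..L, f s x) (Icc a b) := by
  obtain ⟨Y, hY0, hY⟩ := bdd_of_cont jc
  intro s hs
  apply intervalIntegral.continuousWithinAt_of_dominated_interval (bound := fun _ => Y)
  · filter_upwards [self_mem_nhdsWithin] with r hr
    rw [uIoc_of_le hL]
    exact ((slice_cont jc hr).mono Ioc_subset_Icc_self).aestronglyMeasurable measurableSet_Ioc
  · filter_upwards [self_mem_nhdsWithin] with r hr
    refine Eventually.of_forall fun x hx => ?_
    rw [uIoc_of_le hL] at hx
    exact hY r hr x (Ioc_subset_Icc_self hx)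
  · simp
  · refine Eventually.of_forall fun x hx => ?_
    rw [uIoc_of_le hL] at hx
    exact slice_cont' jc (Ioc_subset_Icc_self hx) s hs

lemma fub_open {f g q : ℝ → ℝ → ℝ} {a t2 L B c : ℝ} (ht : a < t2) (hL : 0 ≤ L)
    (hgt : ∀ x ∈ Ioo 0 L, ContinuousOn (fun s => g s x) (Ioc a t2))
    (hgx : ∀ s ∈ Ioc a t2, ContinuousOn (g s) (Icc 0 L))
    (hd : ∀ x ∈ Ioo 0 L, ∀ s ∈ Ioc a t2, HasDerivAt (fun s => f s x) (g s x) s)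
    (hq : ∀ s ∈ Ioc a t2, ContinuousOn (q s) (Icc 0 L)) (hB0 : 0 ≤ B)
    (hB : ∀ s ∈ Ioc a t2, ∀ x ∈ Icc 0 L, |g s x| ≤ B * (1 + q s x))
    (hC : ∀ t1 ∈ Ioo a t2, ∃ C, ∀ s ∈ Icc t1 t2, ∫ x in (0:ℝ)..L, q s x ≤ C)
    (jc : ContinuousOn (fun p : ℝ × ℝ => f p.1 p.2) (Icc a t2 ×ˢ Icc 0 L))
    (hc : ∀ s ∈ Ioc a t2, ∫ x in (0:ℝ)..L, g s x ≤ c) :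
    (∫ x in (0:ℝ)..L, f t2 x) - (∫ x in (0:ℝ)..L, f a x) ≤ c * (t2 - a) := by
  have main : ∀ t1 ∈ Ioo a t2,
      (∫ x in (0:ℝ)..L, f t2 x) - (∫ x in (0:ℝ)..L, f t1 x) ≤ c * (t2 - t1) := by
    intro t1 h1
    obtain ⟨C, hC⟩ := hC t1 h1
    have sub : Icc t1 t2 ⊆ Ioc a t2 := fun s hs => ⟨h1.1.trans_le hs.1, hs.2⟩
    apply fub_le (C := B * (L + C)) h1.2.le hL (fun x hx => (hgt x hx).mono sub)
      (fun s hs => hgx s (sub hs)) (fun x hx s hs => hd x hx s (sub hs)) _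
      (fun s hs => slice_cont jc (Ioc_subset_Icc_self (sub hs)))
      (fun s hs => hc s (sub hs))
    intro s hs
    have i1 := (hq s (sub hs)).intervalIntegrable_of_Icc hL (μ := volume)
    calc ∫ x in (0:ℝ)..L, |g s x| ≤ ∫ x in (0:ℝ)..L, B * (1 + q s x) := by
          apply intervalIntegral.integral_mono_on hL
          · exact ((hgx s (sub hs)).abs).intervalIntegrable_of_Icc hL
          · exact (continuousOn_const.mul (continuousOn_const.add (hq s (sub hs)))).intervalIntegrable_of_Icc hL
          · exact hB s (sub hs)
      _ = B * (L + ∫ x in (0:ℝ)..L, q s x) := by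
          rw [intervalIntegral.integral_const_mul, intervalIntegral.integral_add (by simp) i1]
          simp
      _ ≤ _ := by
          have := hC s hs
          gcongr
  have hcont := cont_int hL jc
  have l1 : Tendsto (fun t1 => (∫ x in (0:ℝ)..L, f t2 x) - (∫ x in (0:ℝ)..L, f t1 x))
      (nhdsWithin a (Ioo a t2)) (nhds ((∫ x in (0:ℝ)..L, f t2 x) - (∫ x in (0:ℝ)..L, f a x))) :=
    ((hcont a ⟨le_rfl, ht.le⟩).mono Ioo_subset_Icc_self).tendsto.const_sub _
  have l2 : Tendsto (fun t1 => c * (t2 - t1)) (nhdsWithin a (Ioo a t2)) (nhds (c * (t2 - a))) := by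
    have : Continuous (fun t1 => c * (t2 - t1)) := by fun_prop
    exact (this.tendsto a).mono_left nhdsWithin_le_nhds
  have : (nhdsWithin a (Ioo a t2)).NeBot := by
    rw [nhdsWithin_Ioo_eq_nhdsGT ht]; infer_instance
  exact le_of_tendsto_of_tendsto l1 l2 (by filter_upwards [self_mem_nhdsWithin] with t1 h1 using main t1 h1)

structure Sol (L : ℝ) (y y1 y2 y3 v : ℝ → ℝ → ℝ) : Prop where
  prof : ∀ t, 0 < t → Prof L (y t) (y1 t) (y2 t) (y3 t)
  hv : ∀ t, v t = fun x => -(y1 t x + y t x * y1 t x + y3 t x)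
  dt : ∀ t, 0 < t → ∀ x ∈ Ioo 0 L, HasDerivAt (fun s => y s x) (v t x) t
  ct : ∀ x ∈ Ioo 0 L, ContinuousOn (fun s => v s x) (Ioi 0)
  jc : ContinuousOn (fun p : ℝ × ℝ => y p.1 p.2) (Ici 0 ×ˢ Icc 0 L)

lemma Sol.vc {L : ℝ} {y y1 y2 y3 v : ℝ → ℝ → ℝ} (S : Sol L y y1 y2 y3 v) {t : ℝ} (ht : 0 < t) :
    ContinuousOn (v t) (Icc 0 L) := by
  rw [S.hv]
  have h0 := (S.prof t ht).c0
  have h1 := (S.prof t ht).c1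
  have h3 := (S.prof t ht).c3
  fun_prop

lemma Sol.step1 {L : ℝ} {y y1 y2 y3 v : ℝ → ℝ → ℝ} (S : Sol L y y1 y2 y3 v) (hL : 0 ≤ L)
    (hL7 : L ≤ 7) {a h Y : ℝ} (ha : 0 < a) (hh : 0 < h) (hY0 : 0 ≤ Y)
    (hY : ∀ s ∈ Icc a (a + h), ∀ x ∈ Icc 0 L, |y s x| ≤ Y)
    (hC : ∀ t1 ∈ Ioo a (a + h), ∃ C, ∀ s ∈ Icc t1 (a + h), ∫ x in (0:ℝ)..L, v s x ^ 2 ≤ C) :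
    ∫ x in (0:ℝ)..L, (1 + x) * (y (a + h) x - y a x) ^ 2 ≤
      8 * exp ((1 + 2 * Y + 64 * Y ^ 2) * h + 1) * h ^ 2 * ∫ x in (0:ℝ)..L, v a x ^ 2 := by
  set K := 1 + 2 * Y + 64 * Y ^ 2 with hK
  set N := ∫ x in (0:ℝ)..L, v a x ^ 2 with hN
  have hK0 : 0 ≤ K := by positivity
  set K' := K + 1 / h with hK'
  have hK'0 : 0 ≤ K' := by positivity
  have hda := slice_cont S.jc (s := a) ha.le
  have hva := S.vc ha
  have key := fub_open (a := a) (t2 := a + h) (L := L) (B := 32 * Y + 32 * K' * Y ^ 2)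
    (c := 8 * h * N)
    (f := fun s x => exp (-(K' * (s - a))) * ((1 + x) * (y s x - y a x) ^ 2))
    (g := fun s x => exp (-(K' * (s - a))) * (2 * (1 + x) * (y s x - y a x) * v s x
      - K' * ((1 + x) * (y s x - y a x) ^ 2)))
    (q := fun s x => v s x ^ 2) (by linarith) hL ?_ ?_ ?_ ?_ ?_ ?_ hC ?_ ?_
  · simp only [sub_self, add_sub_cancel_left] at key
    rw [intervalIntegral.integral_const_mul] at key
    simp only [mul_zero, ne_eq, OfNat.ofNat_ne_zero, not_false_eq_true, zero_pow, intervalIntegral.integral_zero, sub_zero] at key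
    have e : K' * h = K * h + 1 := by rw [hK']; field_simp
    rw [e, Real.exp_neg] at key
    have hp := Real.exp_pos (K * h + 1)
    rw [inv_mul_le_iff₀ hp] at key
    linarith
  · intro x hx
    have h1 : ContinuousOn (fun s => y s x) (Ioc a (a + h)) :=
      (slice_cont' S.jc (Ioo_subset_Icc_self hx)).mono (fun s hs => (ha.trans hs.1).le)
    have h2 : ContinuousOn (fun s => v s x) (Ioc a (a + h)) :=
      (S.ct x hx).mono (fun s hs => (ha.trans hs.1))
    fun_prop
  · intro s hs
    have h1 := slice_cont S.jc (s := s) (ha.trans hs.1).le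
    have h2 := S.vc (ha.trans hs.1)
    fun_prop
  · intro x hx s hs
    have h1 := S.dt s (ha.trans hs.1) x hx
    have h2 : HasDerivAt (fun s => exp (-(K' * (s - a)))) (exp (-(K' * (s - a))) * (-(K' * 1))) s :=
      ((((hasDerivAt_id s).sub_const a).const_mul K').neg).exp
    refine HasDerivAt.congr_deriv (h2.mul (((h1.sub_const (y a x)).pow 2).const_mul (1 + x))) ?_
    push_cast
    ring
  · intro s hs
    have h2 := S.vc (ha.trans hs.1)
    fun_prop
  · positivity
  · intro s hs x hx
    have b1 : |exp (-(K' * (s - a)))| ≤ 1 := by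
      rw [abs_of_pos (exp_pos _), exp_le_one_iff]
      have : 0 ≤ K' * (s - a) := mul_nonneg hK'0 (by linarith [hs.1])
      linarith
    have b2 : |y s x - y a x| ≤ 2 * Y := by
      have h1 := hY s (Ioc_subset_Icc_self hs) x hx
      have h2 := hY a ⟨le_rfl, by linarith⟩ x hx
      exact (abs_sub _ _).trans (by linarith)
    have b3 : |1 + x| ≤ 8 := by rw [abs_of_nonneg (by linarith [hx.1])]; linarith [hx.2]
    have b4 : |v s x| ≤ 1 + v s x ^ 2 := by
      rw [← sq_abs]; nlinarith [sq_nonneg (|v s x| - 1), abs_nonneg (v s x)]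
    have c1 : |2 * (1 + x) * (y s x - y a x) * v s x| ≤ 2 * 8 * (2 * Y) * (1 + v s x ^ 2) := by
      rw [abs_mul, abs_mul, abs_mul, abs_two]; gcongr
    have c2 : |K' * ((1 + x) * (y s x - y a x) ^ 2)| ≤ K' * (8 * (2 * Y) ^ 2) := by
      rw [abs_mul, abs_mul, abs_pow, abs_of_nonneg hK'0]; gcongr
    rw [abs_mul]
    calc _ ≤ 1 * (2 * 8 * (2 * Y) * (1 + v s x ^ 2) + K' * (8 * (2 * Y) ^ 2)) := by
          gcongr
          exact (abs_sub _ _).trans (by linarith)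
      _ ≤ _ := by
          have : 0 ≤ K' * Y ^ 2 * v s x ^ 2 := by positivity
          nlinarith
  · have h1 : ContinuousOn (fun p : ℝ × ℝ => y p.1 p.2) (Icc a (a + h) ×ˢ Icc 0 L) :=
      S.jc.mono (prod_mono (fun s hs => ha.le.trans hs.1) le_rfl)
    have h2 : ContinuousOn (fun p : ℝ × ℝ => y a p.2) (Icc a (a + h) ×ˢ Icc 0 L) :=
      hda.comp (by fun_prop) (fun p hp => hp.2)
    have h3 : Continuous (fun p : ℝ × ℝ => exp (-(K' * (p.1 - a)))) := by fun_prop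
    have h4 : Continuous (fun p : ℝ × ℝ => 1 + p.2) := by fun_prop
    exact h3.continuousOn.mul (h4.continuousOn.mul ((h1.sub h2).pow 2))
  · intro s hs
    have hs0 := ha.trans hs.1
    have hds := slice_cont S.jc (s := s) hs0.le
    have hvs := S.vc hs0
    have d := diff_spatial hL hL7 (S.prof s hs0) (S.prof a ha) hY0
      (hY s (Ioc_subset_Icc_self hs)) (hY a ⟨le_rfl, by linarith⟩)
    have e1 : ∀ t x, -(y1 t x + y t x * y1 t x + y3 t x) = v t x := fun t x => by rw [S.hv]
    simp only [e1] at d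
    rw [← hK] at d
    rw [intervalIntegral.integral_const_mul]
    have i1 : IntervalIntegrable (fun x => 2 * (1 + x) * (y s x - y a x) * (v s x - v a x)) volume 0 L :=
      ContinuousOn.intervalIntegrable_of_Icc hL (by fun_prop)
    have i2 : IntervalIntegrable (fun x => K * ((1 + x) * (y s x - y a x) ^ 2)) volume 0 L :=
      ContinuousOn.intervalIntegrable_of_Icc hL (by fun_prop)
    have i3 : IntervalIntegrable (fun x => 8 * h * v a x ^ 2) volume 0 L :=
      ContinuousOn.intervalIntegrable_of_Icc hL (by fun_prop)
    have m : ∫ x in (0:ℝ)..L, (2 * (1 + x) * (y s x - y a x) * v s x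
      - K' * ((1 + x) * (y s x - y a x) ^ 2)) ≤ 8 * h * N := by
      calc _ ≤ ∫ x in (0:ℝ)..L, ((2 * (1 + x) * (y s x - y a x) * (v s x - v a x)
                - K * ((1 + x) * (y s x - y a x) ^ 2)) + 8 * h * v a x ^ 2) := by
            apply intervalIntegral.integral_mono_on hL
            · exact ContinuousOn.intervalIntegrable_of_Icc hL (by fun_prop)
            · exact (i1.sub i2).add i3
            · intro x hx
              have hx0 : 0 ≤ 1 + x := by linarith [hx.1]
              have c1 : 2 * (y s x - y a x) * v a x ≤ (1 / h) * (y s x - y a x) ^ 2 + h * v a x ^ 2 := by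
                have : 0 ≤ (1 / h) * ((y s x - y a x) - h * v a x) ^ 2 := by positivity
                have e : (1 / h) * ((y s x - y a x) - h * v a x) ^ 2 = (1 / h) * (y s x - y a x) ^ 2
                  - 2 * (y s x - y a x) * v a x + h * v a x ^ 2 := by
                  field_simp
                  ring
                linarith
              have c2 := mul_le_mul_of_nonneg_left c1 hx0
              have c3 : (1 + x) * (h * v a x ^ 2) ≤ 8 * (h * v a x ^ 2) := by
                have : 1 + x ≤ 8 := by linarith [hx.2]
                gcongr
              rw [hK']
              linarith
        _ ≤ _ := by
            rw [intervalIntegral.integral_add (i1.sub i2) i3, intervalIntegral.integral_sub i1 i2,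
              intervalIntegral.integral_const_mul, intervalIntegral.integral_const_mul]
            linarith
    have hN0 : 0 ≤ N := intervalIntegral.integral_nonneg hL (fun x _ => sq_nonneg _)
    have b1 : exp (-(K' * (s - a))) ≤ 1 := by
      rw [exp_le_one_iff]
      have : 0 ≤ K' * (s - a) := mul_nonneg hK'0 (by linarith [hs.1])
      linarith
    calc _ ≤ exp (-(K' * (s - a))) * (8 * h * N) := by gcongr
      _ ≤ 1 * (8 * h * N) := by gcongr
      _ = _ := one_mul _

lemma Sol.step2 {L : ℝ} {y y1 y2 y3 v : ℝ → ℝ → ℝ} (S : Sol L y y1 y2 y3 v) (hL : 0 ≤ L)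
    (hL7 : L ≤ 7) {a b h Y : ℝ} (ha : 0 < a) (hab : a < b) (hh : 0 < h) (hY0 : 0 ≤ Y)
    (hY : ∀ s ∈ Icc a (b + h), ∀ x ∈ Icc 0 L, |y s x| ≤ Y)
    (hC : ∀ t1 ∈ Ioo a (b + h), ∃ C, ∀ s ∈ Icc t1 (b + h), ∫ x in (0:ℝ)..L, v s x ^ 2 ≤ C) :
    ∫ x in (0:ℝ)..L, (1 + x) * (y (b + h) x - y b x) ^ 2 ≤
      exp ((1 + 2 * Y + 64 * Y ^ 2) * (b - a)) *
        ∫ x in (0:ℝ)..L, (1 + x) * (y (a + h) x - y a x) ^ 2 := by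
  set K := 1 + 2 * Y + 64 * Y ^ 2 with hK
  have hK0 : 0 ≤ K := by positivity
  have key := fub_open (a := a) (t2 := b) (L := L) (B := 32 * Y + 32 * K * Y ^ 2)
    (c := 0)
    (f := fun s x => exp (-(K * (s - a))) * ((1 + x) * (y (s + h) x - y s x) ^ 2))
    (g := fun s x => exp (-(K * (s - a))) * (2 * (1 + x) * (y (s + h) x - y s x) * (v (s + h) x - v s x)
      - K * ((1 + x) * (y (s + h) x - y s x) ^ 2)))
    (q := fun s x => v (s + h) x ^ 2 + v s x ^ 2) hab hL ?_ ?_ ?_ ?_ ?_ ?_ ?_ ?_ ?_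
  · simp only [sub_self, mul_zero, neg_zero, exp_zero, one_mul, zero_mul] at key
    rw [intervalIntegral.integral_const_mul] at key
    rw [Real.exp_neg] at key
    have hp := Real.exp_pos (K * (b - a))
    rw [sub_nonpos, inv_mul_le_iff₀ hp] at key
    exact key
  · intro x hx
    have h1 : ContinuousOn (fun s => y s x) (Ioc a b) :=
      (slice_cont' S.jc (Ioo_subset_Icc_self hx)).mono (fun s hs => (ha.trans hs.1).le)
    have h2 : ContinuousOn (fun s => v s x) (Ioc a b) :=
      (S.ct x hx).mono (fun s hs => (ha.trans hs.1))
    have h3 : ContinuousOn (fun s => y (s + h) x) (Ioc a b) :=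
      (slice_cont' S.jc (Ioo_subset_Icc_self hx)).comp (by fun_prop)
        (fun s hs => (add_pos (ha.trans hs.1) hh).le)
    have h4 : ContinuousOn (fun s => v (s + h) x) (Ioc a b) :=
      (S.ct x hx).comp (by fun_prop) (fun s hs => (add_pos (ha.trans hs.1) hh))
    have h5 : ContinuousOn (fun s => exp (-(K * (s - a)))) (Ioc a b) := by fun_prop
    exact h5.mul (((continuousOn_const.mul (h3.sub h1)).mul (h4.sub h2)).sub
      (continuousOn_const.mul (continuousOn_const.mul ((h3.sub h1).pow 2))))
  · intro s hs
    have hs0 := ha.trans hs.1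
    have h1 := slice_cont S.jc (s := s) hs0.le
    have h2 := S.vc hs0
    have h3 := slice_cont S.jc (s := s + h) (add_pos hs0 hh).le
    have h4 := S.vc (add_pos hs0 hh)
    fun_prop
  · intro x hx s hs
    have hs0 := ha.trans hs.1
    have h1 := S.dt s hs0 x hx
    have h3 := (S.dt (s + h) (add_pos hs0 hh) x hx).comp_add_const s h
    have h2 : HasDerivAt (fun s => exp (-(K * (s - a)))) (exp (-(K * (s - a))) * (-(K * 1))) s :=
      ((((hasDerivAt_id s).sub_const a).const_mul K).neg).exp
    refine HasDerivAt.congr_deriv (h2.mul (((h3.sub h1).pow 2).const_mul (1 + x))) ?_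
    simp only [Pi.sub_apply, Pi.pow_apply]
    push_cast
    ring
  · intro s hs
    have hs0 := ha.trans hs.1
    have h2 := S.vc hs0
    have h4 := S.vc (add_pos hs0 hh)
    fun_prop
  · positivity
  · intro s hs x hx
    have b1 : |exp (-(K * (s - a)))| ≤ 1 := by
      rw [abs_of_pos (exp_pos _), exp_le_one_iff]
      have : 0 ≤ K * (s - a) := mul_nonneg hK0 (by linarith [hs.1])
      linarith
    have b2 : |y (s + h) x - y s x| ≤ 2 * Y := by
      have h1 := hY s ⟨hs.1.le, by linarith [hs.2]⟩ x hx
      have h2 := hY (s + h) ⟨by linarith [hs.1], by linarith [hs.2]⟩ x hx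
      exact (abs_sub _ _).trans (by linarith)
    have b3 : |1 + x| ≤ 8 := by rw [abs_of_nonneg (by linarith [hx.1])]; linarith [hx.2]
    have b4 : |v (s + h) x - v s x| ≤ 1 + (v (s + h) x ^ 2 + v s x ^ 2) := by
      rw [abs_le]
      constructor <;> nlinarith [sq_nonneg (v s x - 1), sq_nonneg (v s x + 1),
        sq_nonneg (v (s + h) x - 1), sq_nonneg (v (s + h) x + 1)]
    have c1 : |2 * (1 + x) * (y (s + h) x - y s x) * (v (s + h) x - v s x)|
        ≤ 2 * 8 * (2 * Y) * (1 + (v (s + h) x ^ 2 + v s x ^ 2)) := by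
      rw [abs_mul, abs_mul, abs_mul, abs_two]; gcongr
    have c2 : |K * ((1 + x) * (y (s + h) x - y s x) ^ 2)| ≤ K * (8 * (2 * Y) ^ 2) := by
      rw [abs_mul, abs_mul, abs_pow, abs_of_nonneg hK0]; gcongr
    rw [abs_mul]
    calc _ ≤ 1 * (2 * 8 * (2 * Y) * (1 + (v (s + h) x ^ 2 + v s x ^ 2)) + K * (8 * (2 * Y) ^ 2)) := by
          gcongr
          exact (abs_sub _ _).trans (by linarith)
      _ ≤ _ := by
          have : 0 ≤ K * Y ^ 2 * (v (s + h) x ^ 2 + v s x ^ 2) := by positivity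
          nlinarith
  · intro t1 ht1
    obtain ⟨C, hC⟩ := hC t1 ⟨ht1.1, by linarith [ht1.2]⟩
    refine ⟨C + C, fun s hs => ?_⟩
    have hs0 : 0 < s := ha.trans (ht1.1.trans_le hs.1)
    have h2 := S.vc hs0
    have h4 := S.vc (add_pos hs0 hh)
    rw [intervalIntegral.integral_add
      (ContinuousOn.intervalIntegrable_of_Icc hL (by fun_prop))
      (ContinuousOn.intervalIntegrable_of_Icc hL (by fun_prop))]
    exact add_le_add (hC _ ⟨by linarith [hs.1], by linarith [hs.2]⟩)
      (hC _ ⟨by linarith [hs.1], by linarith [hs.2]⟩)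
  · have h1 : ContinuousOn (fun p : ℝ × ℝ => y p.1 p.2) (Icc a b ×ˢ Icc 0 L) :=
      S.jc.mono (prod_mono (fun s hs => ha.le.trans hs.1) le_rfl)
    have h2 : ContinuousOn (fun p : ℝ × ℝ => y (p.1 + h) p.2) (Icc a b ×ˢ Icc 0 L) :=
      S.jc.comp (f := fun p : ℝ × ℝ => (p.1 + h, p.2)) (by fun_prop)
        (fun p hp => ⟨by have := hp.1.1; simp only [mem_Ici]; linarith, hp.2⟩)
    have h3 : Continuous (fun p : ℝ × ℝ => exp (-(K * (p.1 - a)))) := by fun_prop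
    have h4 : Continuous (fun p : ℝ × ℝ => 1 + p.2) := by fun_prop
    exact h3.continuousOn.mul (h4.continuousOn.mul ((h2.sub h1).pow 2))
  · intro s hs
    have hs0 := ha.trans hs.1
    have hsh := add_pos hs0 hh
    have hds := slice_cont S.jc (s := s) hs0.le
    have hvs := S.vc hs0
    have hds' := slice_cont S.jc (s := s + h) hsh.le
    have hvs' := S.vc hsh
    have d := diff_spatial hL hL7 (S.prof (s + h) hsh) (S.prof s hs0) hY0
      (hY (s + h) ⟨by linarith [hs.1], by linarith [hs.2]⟩) (hY s ⟨hs.1.le, by linarith [hs.2]⟩)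
    have e1 : ∀ t x, -(y1 t x + y t x * y1 t x + y3 t x) = v t x := fun t x => by rw [S.hv]
    simp only [e1] at d
    rw [← hK] at d
    rw [intervalIntegral.integral_const_mul, intervalIntegral.integral_sub
      (ContinuousOn.intervalIntegrable_of_Icc hL (by fun_prop))
      (ContinuousOn.intervalIntegrable_of_Icc hL (by fun_prop)), intervalIntegral.integral_const_mul]
    exact mul_nonpos_of_nonneg_of_nonpos (exp_pos _).le (by linarith)

/-- Fatou's lemma for squares on an interval, with pointwise convergence inside. -/
lemma fatou_sq {L M : ℝ} {F : ℕ → ℝ → ℝ} {G : ℝ → ℝ} (hL : 0 ≤ L)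
    (hF : ∀ n, ContinuousOn (F n) (Icc 0 L)) (hG : ContinuousOn G (Icc 0 L))
    (hlim : ∀ x ∈ Ioo 0 L, Tendsto (fun n => F n x) atTop (nhds (G x)))
    (hM : ∀ n, ∫ x in (0:ℝ)..L, F n x ^ 2 ≤ M) :
    ∫ x in (0:ℝ)..L, G x ^ 2 ≤ M := by
  have hI : ∀ h : ℝ → ℝ, ∫ x in (0:ℝ)..L, h x = ∫ x in Ioo 0 L, h x := fun h => by
    rw [intervalIntegral.integral_of_le hL, integral_Ioc_eq_integral_Ioo]
  have hM0 : 0 ≤ M := le_trans (intervalIntegral.integral_nonneg hL (fun x _ => sq_nonneg _)) (hM 0)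
  have hint : ∀ H : ℝ → ℝ, ContinuousOn H (Icc 0 L) →
      Integrable (fun x => H x ^ 2) (volume.restrict (Ioo 0 L)) := fun H hH =>
    ((hH.pow 2).integrableOn_Icc).mono_set Ioo_subset_Icc_self
  rw [hI, ← ENNReal.ofReal_le_ofReal_iff hM0,
    ofReal_integral_eq_lintegral_ofReal (hint G hG) (Eventually.of_forall fun x => sq_nonneg _)]
  calc ∫⁻ x in Ioo 0 L, ENNReal.ofReal (G x ^ 2)
      = ∫⁻ x in Ioo 0 L, liminf (fun n => ENNReal.ofReal (F n x ^ 2)) atTop := by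
        apply setLIntegral_congr_fun measurableSet_Ioo
        intro x hx
        exact (((ENNReal.continuous_ofReal.tendsto _).comp ((hlim x hx).pow 2)).liminf_eq).symm
    _ ≤ liminf (fun n => ∫⁻ x in Ioo 0 L, ENNReal.ofReal (F n x ^ 2)) atTop := by
        apply lintegral_liminf_le'
        intro n
        exact (hint _ (hF n)).aestronglyMeasurable.aemeasurable.ennreal_ofReal
    _ ≤ ENNReal.ofReal M := by
        apply liminf_le_of_frequently_le'
        apply Frequently.of_forall
        intro n
        rw [← ofReal_integral_eq_lintegral_ofReal (hint _ (hF n)) (Eventually.of_forall fun x => sq_nonneg _)]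
        apply ENNReal.ofReal_le_ofReal
        rw [← hI]; exact hM n

lemma Sol.claim {L : ℝ} {y y1 y2 y3 v : ℝ → ℝ → ℝ} (S : Sol L y y1 y2 y3 v) (hL : 0 ≤ L)
    (hL7 : L ≤ 7) {a t Y : ℝ} (ha : 0 < a) (hat : a < t) (hY0 : 0 ≤ Y)
    (hY : ∀ s ∈ Icc a t, ∀ x ∈ Icc 0 L, |y s x| ≤ Y)
    (hC : ∀ t1 ∈ Ioo a t, ∃ C, ∀ s ∈ Icc t1 t, ∫ x in (0:ℝ)..L, v s x ^ 2 ≤ C) :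
    ∫ x in (0:ℝ)..L, v t x ^ 2 ≤
      8 * exp ((1 + 2 * Y + 64 * Y ^ 2) * (t - a) + 1) * ∫ x in (0:ℝ)..L, v a x ^ 2 := by
  set K := 1 + 2 * Y + 64 * Y ^ 2 with hK
  set N := ∫ x in (0:ℝ)..L, v a x ^ 2 with hN
  have est : ∀ h, 0 < h → h < t - a → ∫ x in (0:ℝ)..L, (y (t - h) x - y t x) ^ 2 ≤
      8 * exp (K * (t - a) + 1) * N * h ^ 2 := by
    intro h hh hht
    have s1 := S.step1 hL hL7 ha hh hY0 (fun s hs => hY s ⟨hs.1, by linarith [hs.2]⟩) (by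
      intro t1 ht1
      obtain ⟨C, hC⟩ := hC t1 ⟨ht1.1, by linarith [ht1.2]⟩
      exact ⟨C, fun s hs => hC s ⟨hs.1, by linarith [hs.2]⟩⟩)
    have s2 := S.step2 hL hL7 (b := t - h) ha (by linarith) hh hY0
      (by rw [sub_add_cancel]; exact hY) (by rw [sub_add_cancel]; exact hC)
    rw [sub_add_cancel] at s2
    rw [← hK] at s1 s2
    have c1 := slice_cont S.jc (s := t) (ha.trans hat).le
    have c2 := slice_cont S.jc (s := t - h) (by simp only [mem_Ici]; linarith)
    calc ∫ x in (0:ℝ)..L, (y (t - h) x - y t x) ^ 2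
        ≤ ∫ x in (0:ℝ)..L, (1 + x) * (y t x - y (t - h) x) ^ 2 := by
          apply intervalIntegral.integral_mono_on hL
          · exact ContinuousOn.intervalIntegrable_of_Icc hL (by fun_prop)
          · exact ContinuousOn.intervalIntegrable_of_Icc hL (by fun_prop)
          · intro x hx
            nlinarith [mul_nonneg hx.1 (sq_nonneg (y t x - y (t - h) x))]
      _ ≤ exp (K * (t - h - a)) * (8 * exp (K * h + 1) * h ^ 2 * N) :=
          s2.trans (by gcongr)
      _ = _ := by
          have e : K * (t - a) + 1 = K * (t - h - a) + (K * h + 1) := by ring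
          rw [e, exp_add (K * (t - h - a))]; ring
  have ht0 := ha.trans hat
  let hn : ℕ → ℝ := fun n => (t - a) / (n + 2)
  have hn0 : ∀ n, 0 < hn n := fun n => div_pos (by linarith) (by positivity)
  have hn1 : ∀ n, hn n < t - a := fun n => by
    apply div_lt_self (by linarith)
    have : (0:ℝ) ≤ n := n.cast_nonneg
    linarith
  have hnl : Tendsto hn atTop (nhds 0) := by
    apply Tendsto.const_div_atTop
    exact tendsto_atTop_add_const_right _ _ tendsto_natCast_atTop_atTop
  apply fatou_sq (F := fun n x => (-(hn n))⁻¹ * (y (t + -(hn n)) x - y t x)) hL _ (S.vc ht0)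
  · intro x hx
    have hd := (S.dt t ht0 x hx).tendsto_slope_zero
    have : Tendsto (fun n => -(hn n)) atTop (nhdsWithin 0 {0}ᶜ) := by
      rw [tendsto_nhdsWithin_iff]
      refine ⟨by simpa using hnl.neg, Eventually.of_forall fun n => ?_⟩
      have := hn0 n
      simp only [mem_compl_iff, mem_singleton_iff]; linarith
    exact hd.comp this
  · intro n
    have e := est (hn n) (hn0 n) (hn1 n)
    have hp := hn0 n
    simp only [mul_pow, ← sub_eq_add_neg]
    rw [intervalIntegral.integral_const_mul]
    have e2 : ((-(hn n))⁻¹) ^ 2 = (hn n ^ 2)⁻¹ := by rw [inv_pow, neg_sq]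
    rw [e2, inv_mul_le_iff₀ (by positivity)]
    linarith
  · intro n
    have h1 := hn1 n
    have c1 := slice_cont S.jc (s := t) ht0.le
    have c2 := slice_cont S.jc (s := t + -(hn n)) (by simp only [mem_Ici]; linarith)
    fun_prop

/-- A Baire category argument upgrading a one-sided propagation estimate to local boundedness. -/
lemma baire_bdd {N : ℝ → ℝ} {p q K : ℝ} (hK : 1 ≤ K) (hN : ∀ t, 0 ≤ N t)
    (hcl : ∀ M, IsClosed {t | t ∈ Icc p q ∧ N t ≤ M})
    (hcla : ∀ a t, p ≤ a → a < t → t ≤ q →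
      (∀ t1 ∈ Ioo a t, ∃ C, ∀ s ∈ Icc t1 t, N s ≤ C) → N t ≤ K * N a) :
    ∃ C, ∀ t ∈ Icc p q, N t ≤ C := by
  let G : Set ℝ := {t | ∃ C, ∀ᶠ s in nhds t, s ∈ Icc p q → N s ≤ C}
  have hGo : IsOpen G := by
    rw [isOpen_iff_mem_nhds]
    rintro t ⟨C, hC⟩
    filter_upwards [eventually_eventually_nhds.2 hC] with s hs using ⟨C, hs⟩
  have hcpt : ∀ a b, Icc a b ⊆ G → ∃ C, ∀ s ∈ Icc a b, s ∈ Icc p q → N s ≤ C := by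
    intro a b hab
    refine isCompact_Icc.induction_on (p := fun S => ∃ C, ∀ s ∈ S, s ∈ Icc p q → N s ≤ C)
      ⟨0, by simp⟩ ?_ ?_ ?_
    · rintro s t hst ⟨C, hC⟩
      exact ⟨C, fun r hr => hC r (hst hr)⟩
    · rintro s t ⟨C, hC⟩ ⟨C', hC'⟩
      refine ⟨max C C', ?_⟩
      rintro r (hr | hr) h
      · exact (hC r hr h).trans (le_max_left _ _)
      · exact (hC' r hr h).trans (le_max_right _ _)
    · intro x hx
      obtain ⟨C, hC⟩ := hab hx
      exact ⟨_, mem_nhdsWithin_of_mem_nhds hC, C, fun s hs h => hs h⟩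
  by_cases hE : Gᶜ = ∅
  · obtain ⟨C, hC⟩ := hcpt p q (by rw [compl_empty_iff.1 hE]; exact subset_univ _)
    exact ⟨C, fun t ht => hC t ht ht⟩
  exfalso
  have hEc : IsClosed Gᶜ := hGo.isClosed_compl
  have hEsub : Gᶜ ⊆ Icc p q := by
    intro t ht
    by_contra h
    apply ht
    refine ⟨0, ?_⟩
    filter_upwards [isClosed_Icc.isOpen_compl.mem_nhds h] with s hs h'
    exact absurd h' hs
  have hne : Nonempty ↥(Gᶜ) := (nonempty_iff_ne_empty.2 hE).to_subtype
  have hcs : CompleteSpace ↥(Gᶜ) := hEc.completeSpace_coe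
  obtain ⟨n, ⟨t0, ht0⟩⟩ := nonempty_interior_of_iUnion_of_closed
    (f := fun n : ℕ => {e : ↥(Gᶜ) | N e ≤ n}) (by
      intro n
      have := (hcl n).preimage (continuous_subtype_val (p := fun t => t ∈ Gᶜ))
      convert this using 1
      ext e
      simp only [mem_setOf_eq, mem_preimage]
      exact ⟨fun h => ⟨hEsub e.2, h⟩, fun h => h.2⟩) (by
      ext e
      simp only [mem_iUnion, mem_setOf_eq, mem_univ, iff_true]
      exact exists_nat_ge _)
  rw [mem_interior_iff_mem_nhds, Metric.mem_nhds_iff] at ht0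
  obtain ⟨ε, hε, hb⟩ := ht0
  have hM : ∀ e ∈ Gᶜ, |e - t0| < ε → N e ≤ n := by
    intro e he h
    exact hb (show (⟨e, he⟩ : ↥(Gᶜ)) ∈ Metric.ball t0 ε from h)
  apply t0.2
  have ht0 := hEsub t0.2
  set τ := max p (t0 - ε / 2) with hτ
  have hpτ : p ≤ τ := le_max_left _ _
  set m := max (n : ℝ) (N τ) with hm
  have hm0 : 0 ≤ m := (hN τ).trans (le_max_right _ _)
  refine ⟨K * m, ?_⟩
  filter_upwards [Ioo_mem_nhds (show (t0 : ℝ) - ε / 2 < t0 by linarith)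
    (show (t0 : ℝ) < t0 + ε / 2 by linarith)] with s hs hspq
  have hτs : τ ≤ s := max_le hspq.1 hs.1.le
  -- last point controlled before s
  obtain ⟨α, hα1, hα2, hα3, hα4⟩ : ∃ α, τ ≤ α ∧ α ≤ s ∧ N α ≤ m ∧ ∀ r, α < r → r ≤ s → r ∈ G := by
    by_cases hem : (Gᶜ ∩ Icc τ s).Nonempty
    · have hc : IsCompact (Gᶜ ∩ Icc τ s) := isCompact_Icc.inter_left hEc
      have h1 := hc.sSup_mem hem
      refine ⟨sSup (Gᶜ ∩ Icc τ s), h1.2.1, h1.2.2, ?_, ?_⟩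
      · refine (hM _ h1.1 ?_).trans (le_max_left _ _)
        rw [abs_lt]
        have : (t0 : ℝ) - ε / 2 ≤ τ := le_max_right _ _
        constructor <;> linarith [h1.2.1, h1.2.2, hs.2]
      · intro r hr hrs
        by_contra h
        exact absurd (le_csSup hc.bddAbove ⟨h, h1.2.1.trans hr.le, hrs⟩) (not_le.2 hr)
    · refine ⟨τ, le_rfl, hτs, le_max_right _ _, ?_⟩
      intro r hr hrs
      by_contra h
      exact hem ⟨r, h, hr.le, hrs⟩
  rcases hα2.eq_or_lt with h | h
  · rw [← h]; nlinarith
  · refine (hcla α s (hpτ.trans hα1) h hspq.2 ?_).trans (by gcongr)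
    intro t1 ht1
    obtain ⟨C, hC⟩ := hcpt t1 s (fun r hr => hα4 r (ht1.1.trans_le hr.1) hr.2)
    exact ⟨C, fun r hr => hC r hr ⟨(hpτ.trans hα1).trans (ht1.1.le.trans hr.1), hr.2.trans hspq.2⟩⟩

lemma Sol.bdd {L : ℝ} {y y1 y2 y3 v : ℝ → ℝ → ℝ} (S : Sol L y y1 y2 y3 v) (hL : 0 ≤ L)
    (hL7 : L ≤ 7) {p q : ℝ} (hp : 0 < p) :
    ∃ C, ∀ t ∈ Icc p q, ∫ x in (0:ℝ)..L, v t x ^ 2 ≤ C := by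
  obtain ⟨Y, hY0, hY⟩ := bdd_of_cont (S.jc.mono (prod_mono_left
    (fun s (hs : s ∈ Icc p q) => hp.le.trans hs.1)))
  have hN : ∀ t, 0 ≤ ∫ x in (0:ℝ)..L, v t x ^ 2 := fun t =>
    intervalIntegral.integral_nonneg hL (fun x _ => sq_nonneg _)
  by_cases hpq : p ≤ q
  swap
  · exact ⟨0, fun t ht => absurd (ht.1.trans ht.2) hpq⟩
  refine baire_bdd (K := 8 * exp ((1 + 2 * Y + 64 * Y ^ 2) * (q - p) + 1)) ?_ hN ?_ ?_
  · have : 1 ≤ exp ((1 + 2 * Y + 64 * Y ^ 2) * (q - p) + 1) := by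
      apply one_le_exp
      have : 0 ≤ q - p := by linarith
      positivity
    linarith
  · intro M
    apply IsSeqClosed.isClosed
    intro u t hu hut
    have htm : t ∈ Icc p q := isClosed_Icc.mem_of_tendsto hut (Eventually.of_forall fun n => (hu n).1)
    refine ⟨htm, ?_⟩
    have ht0 : 0 < t := hp.trans_le htm.1
    refine fatou_sq (F := fun n => v (u n)) hL (fun n => S.vc (hp.trans_le (hu n).1.1)) (S.vc ht0)
      ?_ (fun n => (hu n).2)
    intro x hx
    exact (((S.ct x hx).continuousAt (Ioi_mem_nhds ht0)).tendsto.comp hut)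
  · intro a t hpa hat htq hC
    refine (S.claim hL hL7 (hp.trans_le hpa) hat hY0 (fun s hs => hY s ⟨hpa.trans hs.1, hs.2.trans htq⟩) hC).trans ?_
    have := hN a
    gcongr

lemma Sol.energy {L : ℝ} {y y1 y2 y3 v : ℝ → ℝ → ℝ} (S : Sol L y y1 y2 y3 v) (hL : 0 ≤ L)
    (hL7 : L ≤ 7) {a b : ℝ} (ha : 0 ≤ a) (hab : a < b) :
    ∫ x in (0:ℝ)..L, y b x ^ 2 ≤ ∫ x in (0:ℝ)..L, y a x ^ 2 := by
  have jc := S.jc.mono (prod_mono_left (fun s (hs : s ∈ Icc a b) => ha.trans hs.1))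
  obtain ⟨Y, hY0, hY⟩ := bdd_of_cont jc
  have key := fub_open (f := fun s x => y s x ^ 2) (g := fun s x => 2 * y s x * v s x)
    (q := fun s x => v s x ^ 2) (B := 2 * Y) (c := 0) hab hL ?_ ?_ ?_ ?_ ?_ ?_ ?_ ?_ ?_
  · linarith
  · intro x hx
    exact (continuousOn_const.mul ((slice_cont' jc (Ioo_subset_Icc_self hx)).mono
      Ioc_subset_Icc_self)).mul ((S.ct x hx).mono (fun s hs => ha.trans_lt hs.1))
  · intro s hs
    have h1 := slice_cont jc (Ioc_subset_Icc_self hs)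
    have h2 := S.vc (ha.trans_lt hs.1)
    fun_prop
  · intro x hx s hs
    refine HasDerivAt.congr_deriv ((S.dt s (ha.trans_lt hs.1) x hx).pow 2) ?_
    push_cast
    ring
  · intro s hs
    have h2 := S.vc (ha.trans_lt hs.1)
    fun_prop
  · positivity
  · intro s hs x hx
    have h1 := hY s (Ioc_subset_Icc_self hs) x hx
    have b4 : |v s x| ≤ 1 + v s x ^ 2 := by
      rw [abs_le]
      constructor <;> nlinarith [sq_nonneg (v s x - 1), sq_nonneg (v s x + 1)]
    rw [abs_mul, abs_mul, abs_two]
    gcongr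
  · intro t1 ht1
    exact S.bdd hL hL7 (ha.trans_lt ht1.1)
  · exact jc.pow 2
  · intro s hs
    have hs0 := ha.trans_lt hs.1
    have := energy_spatial hL (S.prof s hs0)
    rw [S.hv]
    rw [this]
    nlinarith [sq_nonneg (y1 s 0)]

lemma tan_flux {a b mid k : ℝ} {w w1 : ℝ → ℝ} (hab : a ≤ b)
    (ha : mid - π / 2 ≤ a) (hb : b ≤ mid + π / 2)
    (h0 : ContinuousOn w (Icc a b)) (h1 : ContinuousOn w1 (Icc a b))
    (hd : ∀ x ∈ Ioo a b, HasDerivAt w (w1 x) x) :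
    9 / 16 * (∫ x in a..b, (w x - k) ^ 2) + (-(3/4) * tan (3/4 * (b - mid))) * (w b - k) ^ 2
      - (-(3/4) * tan (3/4 * (a - mid))) * (w a - k) ^ 2 ≤ ∫ x in a..b, w1 x ^ 2 := by
  have hcos : ∀ x ∈ Icc a b, 0 < cos (3/4 * (x - mid)) := by
    intro x hx
    apply cos_pos_of_mem_Ioo
    constructor <;> nlinarith [hx.1, hx.2, pi_pos]
  have hp : ∀ x ∈ Icc a b, HasDerivAt (fun x => -(3/4) * tan (3/4 * (x - mid)))
      (-(9/16) * (1 + tan (3/4 * (x - mid)) ^ 2)) x := by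
    intro x hx
    have hc := hcos x hx
    have e := (Real.hasDerivAt_tan hc.ne').comp x (((hasDerivAt_id x).sub_const mid).const_mul (3/4))
    refine HasDerivAt.congr_deriv (e.const_mul (-(3/4))) ?_
    rw [tan_eq_sin_div_cos]
    have := sin_sq_add_cos_sq (3/4 * (x - mid))
    generalize 3/4 * (x - mid) = θ at *
    have hc2 : cos θ ^ 2 ≠ 0 := by positivity
    field_simp
    linear_combination 144 * this
  have hpc : ContinuousOn (fun x => -(3/4) * tan (3/4 * (x - mid))) (Icc a b) :=
    fun x hx => (hp x hx).continuousAt.continuousWithinAt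
  have htc : ContinuousOn (fun x => tan (3/4 * (x - mid))) (Icc a b) := by
    refine (continuousOn_const (c := -(4/3 : ℝ)).mul hpc).congr ?_
    intro x hx
    simp only [Pi.mul_apply]
    ring
  have hfl := intervalIntegral.integral_eq_sub_of_hasDerivAt_of_le hab
    (f := fun x => (-(3/4) * tan (3/4 * (x - mid))) * (w x - k) ^ 2)
    (f' := fun x => (-(9/16) * (1 + tan (3/4 * (x - mid)) ^ 2)) * (w x - k) ^ 2
      + (-(3/4) * tan (3/4 * (x - mid))) * (2 * (w x - k) * w1 x)) ?_ ?_ ?_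
  · rw [add_sub_assoc, ← hfl, ← intervalIntegral.integral_const_mul, ← intervalIntegral.integral_add]
    · apply intervalIntegral.integral_mono_on hab
      · apply ContinuousOn.intervalIntegrable_of_Icc hab
        fun_prop
      · apply ContinuousOn.intervalIntegrable_of_Icc hab
        fun_prop
      · intro x hx
        nlinarith [sq_nonneg (w1 x + 3/4 * tan (3/4 * (x - mid)) * (w x - k))]
    · apply ContinuousOn.intervalIntegrable_of_Icc hab
      fun_prop
    · apply ContinuousOn.intervalIntegrable_of_Icc hab
      fun_prop
  · fun_prop
  · intro x hx
    refine HasDerivAt.congr_deriv ((hp x (Ioo_subset_Icc_self hx)).mul (((hd x hx).sub_const k).pow 2)) ?_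
    push_cast
    ring
  · apply ContinuousOn.intervalIntegrable_of_Icc hab
    fun_prop

lemma wirt {w w1 : ℝ → ℝ} (h0 : ContinuousOn w (Icc 0 (2 * π)))
    (h1 : ContinuousOn w1 (Icc 0 (2 * π)))
    (hd : ∀ x ∈ Ioo 0 (2 * π), HasDerivAt w (w1 x) x) (b0 : w 0 = 0) (bL : w (2 * π) = 0)
    (horth : ∫ x in (0:ℝ)..(2 * π), w x * (1 - cos x) = 0) :
    ∫ x in (0:ℝ)..(2 * π), w x ^ 2 ≤ 8 / 3 * ∫ x in (0:ℝ)..(2 * π), w1 x ^ 2 := by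
  have hpi := pi_pos
  have hL : (0:ℝ) ≤ 2 * π := by positivity
  set n := ∫ x in (0:ℝ)..(2 * π), w x ^ 2 with hn
  set D := ∫ x in (0:ℝ)..(2 * π), w1 x ^ 2 with hD
  set J := ∫ x in (0:ℝ)..(2 * π), w x with hJ
  obtain ⟨m, hm⟩ : ∃ m, J = 2 * π * m := ⟨J / (2 * π), by field_simp⟩
  have ii : ∀ {f : ℝ → ℝ}, ContinuousOn f (Icc 0 (2 * π)) → IntervalIntegrable f volume 0 (2 * π) :=
    fun h => h.intervalIntegrable_of_Icc hL
  -- (a)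
  have ha : 6 * π * m ^ 2 ≤ n := by
    have e := flux_eq (L := 2 * π) (I := fun x => (w x - m - 2 * m * cos x) ^ 2)
      (F := fun x => 3 * m ^ 2 * x + 4 * m ^ 2 * sin x + 2 * m ^ 2 * (sin x * cos x))
      (F' := fun x => m ^ 2 + 4 * m ^ 2 * cos x + 4 * m ^ 2 * cos x ^ 2)
      (R := fun x => w x ^ 2 - 6 * m * w x + 4 * m * (w x * (1 - cos x))) hL
      (by fun_prop) (by fun_prop) (by fun_prop) (by
        intro x _
        refine HasDerivAt.congr_deriv ((((hasDerivAt_id x).const_mul (3 * m ^ 2)).add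
          ((hasDerivAt_sin x).const_mul (4 * m ^ 2))).add
          (((hasDerivAt_sin x).mul (hasDerivAt_cos x)).const_mul (2 * m ^ 2))) ?_
        have := sin_sq_add_cos_sq x
        linear_combination (-2 * m ^ 2) * this) (by intro x _; ring)
    have hnn : 0 ≤ ∫ x in (0:ℝ)..(2 * π), (w x - m - 2 * m * cos x) ^ 2 :=
      intervalIntegral.integral_nonneg hL (fun x _ => sq_nonneg _)
    rw [e, intervalIntegral.integral_add (ii (by fun_prop)) (ii (by fun_prop)),
      intervalIntegral.integral_sub (ii (by fun_prop)) (ii (by fun_prop)),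
      intervalIntegral.integral_const_mul, intervalIntegral.integral_const_mul, horth, ← hJ, ← hn, hm] at hnn
    simp only [sin_two_pi, cos_two_pi, sin_zero, cos_zero] at hnn
    nlinarith
  -- choose c
  obtain ⟨c, hc, hck⟩ : ∃ c ∈ Icc 0 π, w c = w (c + π) := by
    have hcont : ContinuousOn (fun x => w x - w (x + π)) (Icc 0 π) := by
      apply ContinuousOn.sub (h0.mono (Icc_subset_Icc le_rfl (by linarith)))
      exact h0.comp (by fun_prop) (fun x hx => ⟨by linarith [hx.1], by linarith [hx.2]⟩)
    have e0 : w 0 - w (0 + π) = - w π := by simp [b0]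
    have e1 : w π - w (π + π) = w π := by
      rw [← two_mul, bL, sub_zero]
    have hz : (0:ℝ) ∈ (fun x => w x - w (x + π)) '' Icc 0 π := by
      rcases le_total 0 (w π) with h | h
      · apply intermediate_value_Icc hpi.le hcont
        rw [e0, e1]; exact ⟨by linarith, h⟩
      · apply intermediate_value_Icc' hpi.le hcont
        rw [e0, e1]; exact ⟨h, by linarith⟩
    obtain ⟨c, hc, h⟩ := hz
    exact ⟨c, hc, sub_eq_zero.1 h⟩
  set k := w c with hk
  have s1 : Icc 0 c ⊆ Icc 0 (2 * π) := Icc_subset_Icc le_rfl (by linarith [hc.2])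
  have s2 : Icc c (c + π) ⊆ Icc 0 (2 * π) := Icc_subset_Icc hc.1 (by linarith [hc.2])
  have s3 : Icc (c + π) (2 * π) ⊆ Icc 0 (2 * π) := Icc_subset_Icc (by linarith [hc.1]) le_rfl
  have o1 : Ioo 0 c ⊆ Ioo 0 (2 * π) := Ioo_subset_Ioo le_rfl (by linarith [hc.2])
  have o2 : Ioo c (c + π) ⊆ Ioo 0 (2 * π) := Ioo_subset_Ioo hc.1 (by linarith [hc.2])
  have o3 : Ioo (c + π) (2 * π) ⊆ Ioo 0 (2 * π) := Ioo_subset_Ioo (by linarith [hc.1]) le_rfl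
  have t1 := tan_flux (k := k) (mid := c - π / 2) hc.1 (by linarith [hc.2]) (by linarith)
    (h0.mono s1) (h1.mono s1) (fun x hx => hd x (o1 hx))
  have t2 := tan_flux (k := k) (a := c) (b := c + π) (mid := c + π / 2) (by linarith) (by linarith) (by linarith)
    (h0.mono s2) (h1.mono s2) (fun x hx => hd x (o2 hx))
  have t3 := tan_flux (k := k) (a := c + π) (b := 2 * π) (mid := c + 3 * π / 2) (by linarith [hc.2]) (by linarith)
    (by linarith [hc.1])
    (h0.mono s3) (h1.mono s3) (fun x hx => hd x (o3 hx))
  have split : ∀ {f : ℝ → ℝ}, ContinuousOn f (Icc 0 (2 * π)) →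
      (∫ x in (0:ℝ)..c, f x) + (∫ x in c..(c + π), f x) + (∫ x in (c + π)..(2 * π), f x)
        = ∫ x in (0:ℝ)..(2 * π), f x := by
    intro f hf
    have i1 := (hf.mono s1).intervalIntegrable_of_Icc hc.1 (μ := volume)
    have i2 := (hf.mono s2).intervalIntegrable_of_Icc (by linarith) (μ := volume)
    have i3 := (hf.mono s3).intervalIntegrable_of_Icc (by linarith [hc.2]) (μ := volume)
    rw [intervalIntegral.integral_add_adjacent_intervals i1 i2,
      intervalIntegral.integral_add_adjacent_intervals (i1.trans i2) i3]
  have e1 := split (f := fun x => w1 x ^ 2) (by fun_prop)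
  have e2 := split (f := fun x => (w x - k) ^ 2) (by fun_prop)
  have e3 : ∫ x in (0:ℝ)..(2 * π), (w x - k) ^ 2 = n - 2 * k * J + 2 * π * k ^ 2 := by
    have : ∀ x, (w x - k) ^ 2 = w x ^ 2 - 2 * k * w x + k ^ 2 := fun x => by ring
    simp_rw [this]
    rw [intervalIntegral.integral_add (ii (by fun_prop)) (ii (by fun_prop)),
      intervalIntegral.integral_sub (ii (by fun_prop)) (ii (by fun_prop)),
      intervalIntegral.integral_const_mul]
    simp [← hn, ← hJ]
  have e4 : 3/4 * (2 * π - (c + 3 * π / 2)) = 3/4 * (0 - (c - π / 2)) := by ring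
  rw [e4] at t3
  simp only [← hk, ← hck, b0, bL, sub_self] at t1 t2 t3
  rw [← hD] at e1
  rw [e3, hm] at e2
  have : 9/16 * (n - 2 * k * (2 * π * m) + 2 * π * k ^ 2) ≤ D := by
    rw [← e2, ← e1]; linarith
  have : 0 ≤ π * (k - m) ^ 2 := by positivity
  nlinarith

/-- The uncontrollable direction at the critical length. -/
noncomputable def phi (x : ℝ) : ℝ := 1 - cos x
/-- The second order corrector. -/
noncomputable def psi (x : ℝ) : ℝ :=
  (x - 2 * π) / 2 * sin x - sin x ^ 2 / 6 + 11 / 36 * (1 - cos x)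
noncomputable def psi1 (x : ℝ) : ℝ :=
  sin x / 2 + (x - 2 * π) / 2 * cos x - sin x * cos x / 3 + 11 / 36 * sin x
noncomputable def psi2 (x : ℝ) : ℝ :=
  cos x - (x - 2 * π) / 2 * sin x - (cos x ^ 2 - sin x ^ 2) / 3 + 11 / 36 * cos x
noncomputable def psi3 (x : ℝ) : ℝ :=
  -(3 / 2) * sin x - (x - 2 * π) / 2 * cos x + 4 / 3 * (sin x * cos x) - 11 / 36 * sin x

@[fun_prop] lemma phi_c : Continuous phi := by unfold phi; fun_prop
@[fun_prop] lemma psi_c : Continuous psi := by unfold psi; fun_prop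
@[fun_prop] lemma psi1_c : Continuous psi1 := by unfold psi1; fun_prop
@[fun_prop] lemma psi2_c : Continuous psi2 := by unfold psi2; fun_prop
@[fun_prop] lemma psi3_c : Continuous psi3 := by unfold psi3; fun_prop

lemma phi_d (x : ℝ) : HasDerivAt phi (sin x) x := by
  unfold phi
  exact HasDerivAt.congr_deriv ((hasDerivAt_cos x).const_sub 1) (by ring)

lemma lin_d (x : ℝ) : HasDerivAt (fun x => (x - 2 * π) / 2) (1 / 2) x :=
  ((hasDerivAt_id x).sub_const _).div_const 2

lemma psi_d (x : ℝ) : HasDerivAt psi (psi1 x) x := by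
  unfold psi psi1
  refine HasDerivAt.congr_deriv ((((lin_d x).mul (hasDerivAt_sin x)).sub
    (((hasDerivAt_sin x).pow 2).div_const 6)).add (((hasDerivAt_cos x).const_sub 1).const_mul (11/36))) ?_
  push_cast
  ring

lemma psi1_d (x : ℝ) : HasDerivAt psi1 (psi2 x) x := by
  unfold psi1 psi2
  refine HasDerivAt.congr_deriv (((((hasDerivAt_sin x).div_const 2).add
    ((lin_d x).mul (hasDerivAt_cos x))).sub
    (((hasDerivAt_sin x).mul (hasDerivAt_cos x)).div_const 3)).add ((hasDerivAt_sin x).const_mul (11/36))) ?_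
  ring

lemma psi2_d (x : ℝ) : HasDerivAt psi2 (psi3 x) x := by
  unfold psi2 psi3
  refine HasDerivAt.congr_deriv ((((hasDerivAt_cos x).sub
    ((lin_d x).mul (hasDerivAt_sin x))).sub
    ((((hasDerivAt_cos x).pow 2).sub ((hasDerivAt_sin x).pow 2)).div_const 3)).add
      ((hasDerivAt_cos x).const_mul (11/36))) ?_
  push_cast
  ring

lemma psi_eq (x : ℝ) : psi1 x + psi3 x = -(phi x * sin x) := by
  unfold psi1 psi3 phi; ring

lemma phi_abs (x : ℝ) : |phi x| ≤ 2 := by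
  unfold phi
  rw [abs_le]; constructor <;> linarith [cos_le_one x, neg_one_le_cos x]

lemma two_pi_le : 2 * π ≤ 63 / 10 := by linarith [pi_lt_d2]

lemma psi_abs {x : ℝ} (hx : x ∈ Icc 0 (2 * π)) : |psi x| ≤ 5 := by
  unfold psi
  have h1 : |(x - 2 * π) / 2 * sin x| ≤ 63 / 20 * 1 := by
    rw [abs_mul]
    have : |(x - 2 * π) / 2| ≤ 63 / 20 := by
      rw [abs_le]; constructor <;> linarith [hx.1, hx.2, two_pi_le]
    gcongr
    exact abs_sin_le_one x
  have h2 : |11 / 36 * (1 - cos x)| ≤ 11 / 36 * 2 := by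
    rw [abs_mul, abs_of_nonneg (by norm_num : (0:ℝ) ≤ 11 / 36)]
    have := phi_abs x
    unfold phi at this
    gcongr
  have h3 := sin_sq_le_one x
  have h4 := sq_nonneg (sin x)
  rw [abs_le] at *
  constructor <;> linarith

lemma psi1_abs {x : ℝ} (hx : x ∈ Icc 0 (2 * π)) : |psi1 x| ≤ 5 := by
  unfold psi1
  have h1 : |(x - 2 * π) / 2 * cos x| ≤ 63 / 20 * 1 := by
    rw [abs_mul]
    have : |(x - 2 * π) / 2| ≤ 63 / 20 := by
      rw [abs_le]; constructor <;> linarith [hx.1, hx.2, two_pi_le]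
    gcongr
    exact abs_cos_le_one x
  have h3 : |sin x * cos x| ≤ 1 * 1 := by
    rw [abs_mul]; gcongr
    · exact abs_sin_le_one x
    · exact abs_cos_le_one x
  have h4 := abs_sin_le_one x
  rw [abs_le] at *
  constructor <;> linarith

lemma two_pi_nn : (0:ℝ) ≤ 2 * π := by positivity

lemma ii {f : ℝ → ℝ} (h : ContinuousOn f (Icc 0 (2 * π))) : IntervalIntegrable f volume 0 (2 * π) :=
  h.intervalIntegrable_of_Icc two_pi_nn

lemma int_phi_sq : ∫ x in (0:ℝ)..(2 * π), phi x * phi x = 3 * π := by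
  rw [flux_eq (F := fun x => 3 / 2 * x - 2 * sin x + sin x * cos x / 2)
    (F' := fun x => phi x * phi x) (R := fun _ => 0) two_pi_nn (by fun_prop) (by fun_prop) (by fun_prop)]
  · simp; ring
  · intro x _
    refine HasDerivAt.congr_deriv ((((hasDerivAt_id x).const_mul (3/2)).sub
      ((hasDerivAt_sin x).const_mul 2)).add (((hasDerivAt_sin x).mul (hasDerivAt_cos x)).div_const 2)) ?_
    unfold phi
    have := sin_sq_add_cos_sq x
    linear_combination (-1/2) * this
  · intro x _; ring

lemma int_phi_sin : ∫ x in (0:ℝ)..(2 * π), phi x ^ 2 * sin x = 0 := by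
  rw [flux_eq (F := fun x => phi x ^ 3 / 3)
    (F' := fun x => phi x ^ 2 * sin x) (R := fun _ => 0) two_pi_nn (by fun_prop) (by fun_prop) (by fun_prop)]
  · simp [phi]
  · intro x _
    refine HasDerivAt.congr_deriv (((phi_d x).pow 3).div_const 3) ?_
    push_cast
    ring
  · intro x _; ring

lemma int_psi_phi : ∫ x in (0:ℝ)..(2 * π), psi x * phi x = 0 := by
  rw [flux_eq (F := fun x => -((x - 2 * π) / 2 * cos x) + sin x / 2
      - ((x - 2 * π) / 2 * (sin x ^ 2 / 2) - (x - sin x * cos x) / 8)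
      - (x - sin x * cos x) / 12 + sin x ^ 3 / 18
      + 11 / 36 * (3 / 2 * x - 2 * sin x + sin x * cos x / 2))
    (F' := fun x => psi x * phi x) (R := fun _ => 0) two_pi_nn (by fun_prop) (by fun_prop) (by fun_prop)]
  · simp; ring
  · intro x _
    have hs := hasDerivAt_sin x
    have hc := hasDerivAt_cos x
    have hx := hasDerivAt_id x
    refine HasDerivAt.congr_deriv ((((((((lin_d x).mul hc).neg.add (hs.div_const 2)).sub
      (((lin_d x).mul ((hs.pow 2).div_const 2)).sub ((hx.sub (hs.mul hc)).div_const 8))).sub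
      ((hx.sub (hs.mul hc)).div_const 12)).add ((hs.pow 3).div_const 18)).add
      ((((hx.const_mul (3/2)).sub (hs.const_mul 2)).add ((hs.mul hc).div_const 2)).const_mul (11/36)))) ?_
    unfold phi psi
    have := sin_sq_add_cos_sq x
    simp only [Pi.pow_apply]
    push_cast
    have e : sin x ^ 2 = 1 - cos x ^ 2 := by linarith
    ring_nf
    simp only [e]
    ring
  · intro x _; ring

lemma l1sq {w : ℝ → ℝ} (h : ContinuousOn w (Icc 0 (2 * π))) :
    (∫ x in (0:ℝ)..(2 * π), |w x|) ^ 2 ≤ 63 / 10 * ∫ x in (0:ℝ)..(2 * π), w x ^ 2 := by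
  set S := ∫ x in (0:ℝ)..(2 * π), |w x| with hS
  set n := ∫ x in (0:ℝ)..(2 * π), w x ^ 2 with hn
  have hpi := pi_pos
  have hn0 : 0 ≤ n := intervalIntegral.integral_nonneg two_pi_nn (fun x _ => sq_nonneg _)
  have h2 := h.abs
  have e : ∫ x in (0:ℝ)..(2 * π), (2 * π * |w x| - S) ^ 2 = (2 * π) ^ 2 * n - (2 * π) * S ^ 2 := by
    have : ∀ x, (2 * π * |w x| - S) ^ 2 = (2 * π) ^ 2 * w x ^ 2 - (4 * π * S) * |w x| + S ^ 2 :=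
      fun x => by rw [← sq_abs (w x)]; ring
    simp_rw [this]
    rw [intervalIntegral.integral_add (ii (by fun_prop)) (ii (by fun_prop)),
      intervalIntegral.integral_sub (ii (by fun_prop)) (ii (by fun_prop)),
      intervalIntegral.integral_const_mul, intervalIntegral.integral_const_mul, ← hS, ← hn]
    simp
    ring
  have hnn : 0 ≤ ∫ x in (0:ℝ)..(2 * π), (2 * π * |w x| - S) ^ 2 :=
    intervalIntegral.integral_nonneg two_pi_nn (fun x _ => sq_nonneg _)
  rw [e] at hnn
  have : 0 ≤ (2 * π) * (2 * π * n - S ^ 2) := by linarith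
  have := nonneg_of_mul_nonneg_right this (by positivity)
  nlinarith [two_pi_le]

lemma sup_sq {w w1 : ℝ → ℝ} (h0 : ContinuousOn w (Icc 0 (2 * π)))
    (h1 : ContinuousOn w1 (Icc 0 (2 * π)))
    (hd : ∀ x ∈ Ioo 0 (2 * π), HasDerivAt w (w1 x) x) (b0 : w 0 = 0) {x : ℝ}
    (hx : x ∈ Icc 0 (2 * π)) : w x ^ 2 ≤ 63 / 10 * ∫ x in (0:ℝ)..(2 * π), w1 x ^ 2 := by
  refine le_trans ?_ (l1sq h1)
  rw [← sq_abs (w x)]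
  have s : Icc 0 x ⊆ Icc 0 (2 * π) := Icc_subset_Icc le_rfl hx.2
  have e := intervalIntegral.integral_eq_sub_of_hasDerivAt_of_le hx.1 (h0.mono s)
    (fun y hy => hd y ⟨hy.1, hy.2.trans_le hx.2⟩) ((h1.mono s).intervalIntegrable_of_Icc hx.1)
  rw [b0, sub_zero] at e
  have : |w x| ≤ ∫ x in (0:ℝ)..(2 * π), |w1 x| := by
    rw [← e]
    refine (intervalIntegral.abs_integral_le_integral_abs hx.1).trans ?_
    apply intervalIntegral.integral_mono_interval le_rfl hx.1 hx.2
    · exact Eventually.of_forall fun x => abs_nonneg _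
    · exact ii h1.abs
  gcongr

lemma Prof.corr {f f1 f2 f3 : ℝ → ℝ} (p : Prof (2 * π) f f1 f2 f3) (A : ℝ) :
    Prof (2 * π) (fun x => f x - A * phi x - A ^ 2 * psi x)
      (fun x => f1 x - A * sin x - A ^ 2 * psi1 x)
      (fun x => f2 x - A * cos x - A ^ 2 * psi2 x)
      (fun x => f3 x - A * (-sin x) - A ^ 2 * psi3 x) := by
  have h0 := p.c0
  have h1 := p.c1
  have h2 := p.c2
  have h3 := p.c3
  refine ⟨by fun_prop, by fun_prop, by fun_prop, by fun_prop, ?_, ?_, ?_, ?_, ?_, ?_⟩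
  · intro x hx
    exact ((p.d0 x hx).sub ((phi_d x).const_mul A)).sub ((psi_d x).const_mul _)
  · intro x hx
    exact ((p.d1 x hx).sub ((hasDerivAt_sin x).const_mul A)).sub ((psi1_d x).const_mul _)
  · intro x hx
    exact ((p.d2 x hx).sub ((hasDerivAt_cos x).const_mul A)).sub ((psi2_d x).const_mul _)
  · simp [p.b0, phi, psi]
  · simp [p.bL, phi, psi]
  · simp [p.b1, psi1]

/-- The weighted identity for the corrected profile. -/
lemma weighted {w w1 w2 w3 : ℝ → ℝ} (p : Prof (2 * π) w w1 w2 w3) (A a : ℝ) :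
    ∫ x in (0:ℝ)..(2 * π), 2 * (1 + x) * w x *
      (-((w1 x + A * sin x + A ^ 2 * psi1 x)
        + (w x + A * phi x + A ^ 2 * psi x) * (w1 x + A * sin x + A ^ 2 * psi1 x)
        + (w3 x + A * (-sin x) + A ^ 2 * psi3 x)) - a * (phi x + 2 * A * psi x))
    = -(w1 0) ^ 2 + ∫ x in (0:ℝ)..(2 * π), (-3 * w1 x ^ 2 + w x ^ 2
      + ((A * phi x + A ^ 2 * psi x) - (1 + x) * (A * sin x + A ^ 2 * psi1 x)) * w x ^ 2
      + 2 / 3 * w x ^ 3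
      - 2 * (1 + x) * w x * (A ^ 3 * (sin x * psi x + phi x * psi1 x) + A ^ 4 * (psi x * psi1 x))
      - 2 * (1 + x) * w x * (a * (phi x + 2 * A * psi x))) := by
  have h0 := p.c0
  have h1 := p.c1
  have h2 := p.c2
  have h3 := p.c3
  rw [flux_eq (F := fun x => -2 * ((1 + x) * (w x * w2 x)) + 2 * (w x * w1 x) + (1 + x) * w1 x ^ 2
      - (1 + x) * w x ^ 2 - (1 + x) * ((A * phi x + A ^ 2 * psi x) * w x ^ 2)
      - 2 / 3 * ((1 + x) * w x ^ 3))
    (F' := fun x => -2 * (1 + x) * w x * w3 x + 3 * w1 x ^ 2 - w x ^ 2 - 2 * (1 + x) * w x * w1 x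
      - ((A * phi x + A ^ 2 * psi x) + (1 + x) * (A * sin x + A ^ 2 * psi1 x)) * w x ^ 2
      - 2 * (1 + x) * (A * phi x + A ^ 2 * psi x) * w x * w1 x - 2 / 3 * w x ^ 3
      - 2 * (1 + x) * w x ^ 2 * w1 x)
    (R := fun x => (-3 * w1 x ^ 2 + w x ^ 2
      + ((A * phi x + A ^ 2 * psi x) - (1 + x) * (A * sin x + A ^ 2 * psi1 x)) * w x ^ 2
      + 2 / 3 * w x ^ 3
      - 2 * (1 + x) * w x * (A ^ 3 * (sin x * psi x + phi x * psi1 x) + A ^ 4 * (psi x * psi1 x))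
      - 2 * (1 + x) * w x * (a * (phi x + 2 * A * psi x)))) two_pi_nn
      (by fun_prop) (by fun_prop) (by fun_prop)]
  · simp [p.b0, p.bL, p.b1]
  · intro x hx
    have d0 := p.d0 x hx
    have d1 := p.d1 x hx
    have d2 := p.d2 x hx
    have hr : HasDerivAt (fun x : ℝ => 1 + x) 1 x := by
      simpa using (hasDerivAt_id x).const_add 1
    have hg := ((phi_d x).const_mul A).add ((psi_d x).const_mul (A ^ 2))
    refine HasDerivAt.congr_deriv (((((((hr.mul (d0.mul d2)).const_mul (-2)).add
      ((d0.mul d1).const_mul 2)).add (hr.mul (d1.pow 2))).sub (hr.mul (d0.pow 2))).sub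
      (hr.mul (hg.mul (d0.pow 2)))).sub ((hr.mul (d0.pow 3)).const_mul (2/3))) ?_
    simp only [Pi.add_apply, Pi.mul_apply, Pi.pow_apply]
    push_cast
    ring
  · intro x _
    linear_combination (-2 * (1 + x) * w x * A ^ 2) * psi_eq x

lemma a_bound {w : ℝ → ℝ} (h0 : ContinuousOn w (Icc 0 (2 * π))) {A a : ℝ} (hA : |A| ≤ 1 / 100000)
    (ha : ∫ x in (0:ℝ)..(2 * π), (w x + A * phi x + A ^ 2 * psi x) ^ 2 * sin x = 6 * π * a) :
    18 * |a| ≤ (∫ x in (0:ℝ)..(2 * π), w x ^ 2) + 6 * |A| * (∫ x in (0:ℝ)..(2 * π), |w x|)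
      + 150 * |A| ^ 3 := by
  have hpi := pi_gt_three
  have e : ∫ x in (0:ℝ)..(2 * π), ((w x + A * phi x + A ^ 2 * psi x) ^ 2 * sin x
      - A ^ 2 * (phi x ^ 2 * sin x)) = 6 * π * a := by
    rw [intervalIntegral.integral_sub (ii (by fun_prop)) (ii (by fun_prop)), ha,
      intervalIntegral.integral_const_mul, int_phi_sin]
    ring
  have h1 : |6 * π * a| ≤ ∫ x in (0:ℝ)..(2 * π), (w x ^ 2 + 6 * |A| * |w x| + 21 * |A| ^ 3) := by
    rw [← e]
    refine (intervalIntegral.abs_integral_le_integral_abs two_pi_nn).trans ?_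
    have h0' := h0.abs
    apply intervalIntegral.integral_mono_on two_pi_nn (ii (by fun_prop)) (ii (by fun_prop))
    intro x hx
    have b1 := phi_abs x
    have b2 := psi_abs hx
    have b3 := abs_sin_le_one x
    have e2 : (w x + A * phi x + A ^ 2 * psi x) ^ 2 * sin x - A ^ 2 * (phi x ^ 2 * sin x)
      = (w x ^ 2 + 2 * w x * (A * phi x + A ^ 2 * psi x) + (2 * A ^ 3 * phi x * psi x + A ^ 4 * psi x ^ 2))
        * sin x := by ring
    have hB := abs_nonneg A
    have c1 : |A * phi x + A ^ 2 * psi x| ≤ 3 * |A| := by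
      refine (abs_add_le _ _).trans ?_
      rw [abs_mul, abs_mul, abs_pow]
      have : |A| * |phi x| + |A| ^ 2 * |psi x| ≤ |A| * 2 + |A| ^ 2 * 5 := by gcongr
      nlinarith
    have c2 : |2 * A ^ 3 * phi x * psi x + A ^ 4 * psi x ^ 2| ≤ 21 * |A| ^ 3 := by
      refine (abs_add_le _ _).trans ?_
      simp only [abs_mul, abs_pow, abs_two]
      have : 2 * |A| ^ 3 * |phi x| * |psi x| + |A| ^ 4 * |psi x| ^ 2
        ≤ 2 * |A| ^ 3 * 2 * 5 + |A| ^ 4 * 5 ^ 2 := by gcongr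
      have h3 : 0 ≤ |A| ^ 3 := by positivity
      nlinarith
    rw [e2, abs_mul]
    calc _ ≤ (w x ^ 2 + 6 * |A| * |w x| + 21 * |A| ^ 3) * 1 := by
          have hh : |w x ^ 2 + 2 * w x * (A * phi x + A ^ 2 * psi x)
              + (2 * A ^ 3 * phi x * psi x + A ^ 4 * psi x ^ 2)| ≤
              w x ^ 2 + 6 * |A| * |w x| + 21 * |A| ^ 3 := by
            refine (abs_add_le _ _).trans (add_le_add ((abs_add_le _ _).trans (add_le_add ?_ ?_)) c2)
            · rw [abs_of_nonneg (sq_nonneg _)]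
            · rw [abs_mul, abs_mul, abs_two]
              have := mul_le_mul_of_nonneg_left c1 (abs_nonneg (w x))
              linarith
          gcongr
      _ = _ := mul_one _
  have h0' := h0.abs
  rw [intervalIntegral.integral_add (ii (by fun_prop)) (ii (by fun_prop)),
      intervalIntegral.integral_add (ii (by fun_prop)) (ii (by fun_prop)),
      intervalIntegral.integral_const_mul] at h1
  simp only [intervalIntegral.integral_const, smul_eq_mul, sub_zero] at h1
  rw [abs_mul, abs_of_pos (by positivity : (0:ℝ) < 6 * π)] at h1
  have : 18 * |a| ≤ 6 * π * |a| := by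
    have := abs_nonneg a
    nlinarith
  have h3 : 0 ≤ |A| ^ 3 := by positivity
  have := two_pi_le
  nlinarith

lemma rem_pt {A a x ω ω1 D : ℝ} (hA : |A| ≤ 1 / 100000) (hx : x ∈ Icc 0 (2 * π))
    (hD : ω ^ 2 ≤ 63 / 10 * D) :
    (-3 * ω1 ^ 2 + ω ^ 2
      + ((A * phi x + A ^ 2 * psi x) - (1 + x) * (A * sin x + A ^ 2 * psi1 x)) * ω ^ 2
      + 2 / 3 * ω ^ 3
      - 2 * (1 + x) * ω * (A ^ 3 * (sin x * psi x + phi x * psi1 x) + A ^ 4 * (psi x * psi1 x))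
      - 2 * (1 + x) * ω * (a * (phi x + 2 * A * psi x)))
    ≤ -3 * ω1 ^ 2 + (1 + 20 * |A| + 1 / 100) * ω ^ 2 + (21 / 5 * D + 48 * |a|) * |ω|
      + 2000000 * A ^ 6 := by
  have b1 := phi_abs x
  have b2 := psi_abs hx
  have b3 := abs_sin_le_one x
  have b4 := psi1_abs hx
  have hx8 : |1 + x| ≤ 8 := by
    rw [abs_le]; constructor <;> linarith [hx.1, hx.2, two_pi_le]
  have hB := abs_nonneg A
  have hw := abs_nonneg ω
  have t1 : (A * phi x + A ^ 2 * psi x) - (1 + x) * (A * sin x + A ^ 2 * psi1 x) ≤ 20 * |A| := by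
    refine (le_abs_self _).trans ((abs_sub _ _).trans ?_)
    have c1 : |A * phi x + A ^ 2 * psi x| ≤ |A| * 2 + |A| ^ 2 * 5 := by
      refine (abs_add_le _ _).trans ?_
      rw [abs_mul, abs_mul, abs_pow]
      gcongr
    have c2 : |(1 + x) * (A * sin x + A ^ 2 * psi1 x)| ≤ 8 * (|A| * 1 + |A| ^ 2 * 5) := by
      have : |A * sin x + A ^ 2 * psi1 x| ≤ |A| * 1 + |A| ^ 2 * 5 := by
        refine (abs_add_le _ _).trans ?_
        rw [abs_mul, abs_mul, abs_pow]
        gcongr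
      rw [abs_mul]
      gcongr
    nlinarith
  have t2 : 2 / 3 * ω ^ 3 ≤ 21 / 5 * D * |ω| := by
    have : ω ^ 3 ≤ |ω| * ω ^ 2 := by
      rw [pow_succ, mul_comm]
      exact mul_le_mul_of_nonneg_right (le_abs_self ω) (sq_nonneg ω)
    nlinarith [mul_le_mul_of_nonneg_left hD hw]
  have t3 : -(2 * (1 + x) * ω * (A ^ 3 * (sin x * psi x + phi x * psi1 x) + A ^ 4 * (psi x * psi1 x)))
      ≤ 256 * (|A| ^ 3 * |ω|) := by
    refine (neg_le_abs _).trans ?_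
    have c : |A ^ 3 * (sin x * psi x + phi x * psi1 x) + A ^ 4 * (psi x * psi1 x)|
        ≤ |A| ^ 3 * (1 * 5 + 2 * 5) + |A| ^ 4 * (5 * 5) := by
      refine (abs_add_le _ _).trans ?_
      rw [abs_mul, abs_mul, abs_pow, abs_pow, abs_mul]
      have : |sin x * psi x + phi x * psi1 x| ≤ 1 * 5 + 2 * 5 := by
        refine (abs_add_le _ _).trans ?_
        rw [abs_mul, abs_mul]
        gcongr
      gcongr
    have c' : |A ^ 3 * (sin x * psi x + phi x * psi1 x) + A ^ 4 * (psi x * psi1 x)| ≤ 16 * |A| ^ 3 := by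
      have h3 : 0 ≤ |A| ^ 3 := by positivity
      nlinarith
    rw [abs_mul, abs_mul, abs_mul, abs_two]
    calc _ ≤ 2 * 8 * |ω| * (16 * |A| ^ 3) := by gcongr
      _ = _ := by ring
  have t3' : 256 * (|A| ^ 3 * |ω|) ≤ ω ^ 2 / 100 + 2000000 * A ^ 6 := by
    have e1 : A ^ 6 = (|A| ^ 3) ^ 2 := by
      rw [← pow_mul, show 3 * 2 = 6 from rfl, Even.pow_abs (by decide)]
    rw [e1, ← sq_abs ω]
    nlinarith [sq_nonneg (|ω| - 12800 * |A| ^ 3), sq_nonneg (|A| ^ 3)]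
  have t4 : -(2 * (1 + x) * ω * (a * (phi x + 2 * A * psi x))) ≤ 48 * |a| * |ω| := by
    refine (neg_le_abs _).trans ?_
    have c : |phi x + 2 * A * psi x| ≤ 3 := by
      refine (abs_add_le _ _).trans ?_
      rw [abs_mul, abs_mul, abs_two]
      have : |phi x| + 2 * |A| * |psi x| ≤ 2 + 2 * (1 / 100000) * 5 := by gcongr
      linarith
    rw [abs_mul, abs_mul, abs_mul, abs_two, abs_mul]
    calc _ ≤ 2 * 8 * |ω| * (|a| * 3) := by gcongr
      _ = _ := by ring
  have t5 := mul_le_mul_of_nonneg_right t1 (sq_nonneg ω)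
  linarith

lemma core {w w1 w2 w3 : ℝ → ℝ} (p : Prof (2 * π) w w1 w2 w3) {A a : ℝ} (hA : |A| ≤ 1 / 100000)
    (ha : ∫ x in (0:ℝ)..(2 * π), (w x + A * phi x + A ^ 2 * psi x) ^ 2 * sin x = 6 * π * a)
    (horth : ∫ x in (0:ℝ)..(2 * π), w x * phi x = 0)
    (hS : ∫ x in (0:ℝ)..(2 * π), |w x| ≤ 1 / 10000) :
    ∫ x in (0:ℝ)..(2 * π), 2 * (1 + x) * w x *
      (-((w1 x + A * sin x + A ^ 2 * psi1 x)
        + (w x + A * phi x + A ^ 2 * psi x) * (w1 x + A * sin x + A ^ 2 * psi1 x)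
        + (w3 x + A * (-sin x) + A ^ 2 * psi3 x)) - a * (phi x + 2 * A * psi x))
    ≤ -(w1 0) ^ 2 + A ^ 4 - 1 / 16 * ∫ x in (0:ℝ)..(2 * π), w x ^ 2 := by
  have h0 := p.c0
  have h1 := p.c1
  have h0' := h0.abs
  rw [weighted p]
  have hab := a_bound h0 hA ha
  have hs2 := l1sq h0
  have hw := wirt h0 h1 p.d0 p.b0 p.bL horth
  set n := ∫ x in (0:ℝ)..(2 * π), w x ^ 2 with hn
  set D := ∫ x in (0:ℝ)..(2 * π), w1 x ^ 2 with hD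
  set S := ∫ x in (0:ℝ)..(2 * π), |w x| with hSd
  have hn0 : 0 ≤ n := intervalIntegral.integral_nonneg two_pi_nn (fun x _ => sq_nonneg _)
  have hS0 : 0 ≤ S := intervalIntegral.integral_nonneg two_pi_nn (fun x _ => abs_nonneg _)
  have hD0 : 0 ≤ D := intervalIntegral.integral_nonneg two_pi_nn (fun x _ => sq_nonneg _)
  have hint : ∫ x in (0:ℝ)..(2 * π), (-3 * w1 x ^ 2 + w x ^ 2
      + ((A * phi x + A ^ 2 * psi x) - (1 + x) * (A * sin x + A ^ 2 * psi1 x)) * w x ^ 2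
      + 2 / 3 * w x ^ 3
      - 2 * (1 + x) * w x * (A ^ 3 * (sin x * psi x + phi x * psi1 x) + A ^ 4 * (psi x * psi1 x))
      - 2 * (1 + x) * w x * (a * (phi x + 2 * A * psi x)))
      ≤ ∫ x in (0:ℝ)..(2 * π), (-3 * w1 x ^ 2 + (1 + 20 * |A| + 1 / 100) * w x ^ 2
        + (21 / 5 * D + 48 * |a|) * |w x| + 2000000 * A ^ 6) := by
    apply intervalIntegral.integral_mono_on two_pi_nn (ii (by fun_prop)) (ii (by fun_prop))
    intro x hx
    exact rem_pt hA hx (sup_sq h0 h1 p.d0 p.b0 hx)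
  rw [intervalIntegral.integral_add (ii (by fun_prop)) (ii (by fun_prop)),
      intervalIntegral.integral_add (ii (by fun_prop)) (ii (by fun_prop)),
      intervalIntegral.integral_add (ii (by fun_prop)) (ii (by fun_prop)),
      intervalIntegral.integral_const_mul, intervalIntegral.integral_const_mul,
      intervalIntegral.integral_const_mul, ← hn, ← hD, ← hSd] at hint
  simp only [intervalIntegral.integral_const, smul_eq_mul, sub_zero] at hint
  have hB := abs_nonneg A
  have hA2 : A ^ 2 ≤ 1 / 10000000000 := by rw [← sq_abs]; nlinarith
  have hA4 : 0 ≤ A ^ 4 := by positivity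
  have u1 : 2 * π * (2000000 * A ^ 6) ≤ 1 / 100 * A ^ 4 := by
    have e : A ^ 6 = A ^ 4 * A ^ 2 := by ring
    have : A ^ 6 ≤ A ^ 4 * (1 / 10000000000) := by rw [e]; gcongr
    have h6 : 0 ≤ A ^ 6 := by positivity
    nlinarith [two_pi_le]
  have u2 : 20 * |A| * n ≤ 20 * (1 / 100000) * n := by gcongr
  have u3 : D * S ≤ D * (1 / 10000) := by gcongr
  have u4 : |a| * S ≤ 1 / 1000 * n + 1 / 1000 * A ^ 4 := by
    have v1 : 18 * |a| * S ≤ (n + 6 * |A| * S + 150 * |A| ^ 3) * S := by gcongr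
    have v2 : n * S ≤ n * (1 / 10000) := by gcongr
    have v3 : |A| * S ^ 2 ≤ 1 / 100000 * (63 / 10 * n) := by gcongr
    have v4 : |A| ^ 3 * S ≤ 1 / 100000 * ((A ^ 4 + S ^ 2) / 2) := by
      have e : |A| ^ 3 * S = |A| * (|A| ^ 2 * S) := by ring
      rw [e]
      have : |A| ^ 2 * S ≤ (A ^ 4 + S ^ 2) / 2 := by
        rw [sq_abs]; nlinarith [sq_nonneg (A ^ 2 - S)]
      gcongr
    nlinarith
  nlinarith

lemma corr_abs {A x : ℝ} (hA : |A| ≤ 1 / 100000) (hx : x ∈ Icc 0 (2 * π)) :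
    (A * phi x + A ^ 2 * psi x) ^ 2 ≤ 9 * A ^ 2 := by
  have b1 := phi_abs x
  have b2 := psi_abs hx
  have hB := abs_nonneg A
  have c1 : |A * phi x + A ^ 2 * psi x| ≤ 3 * |A| := by
    refine (abs_add_le _ _).trans ?_
    rw [abs_mul, abs_mul, abs_pow]
    have : |A| * |phi x| + |A| ^ 2 * |psi x| ≤ |A| * 2 + |A| ^ 2 * 5 := by gcongr
    nlinarith
  have e := sq_abs A
  rw [← sq_abs]
  have := abs_nonneg (A * phi x + A ^ 2 * psi x)
  nlinarith

lemma coef_sq {f : ℝ → ℝ} (h0 : ContinuousOn f (Icc 0 (2 * π))) {A : ℝ}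
    (hA : ∫ x in (0:ℝ)..(2 * π), f x * phi x = 3 * π * A) :
    A ^ 2 ≤ ∫ x in (0:ℝ)..(2 * π), f x ^ 2 := by
  have hl := l1sq h0
  have h0' := h0.abs
  have h1 : |3 * π * A| ≤ 2 * ∫ x in (0:ℝ)..(2 * π), |f x| := by
    rw [← hA, ← intervalIntegral.integral_const_mul]
    refine (intervalIntegral.abs_integral_le_integral_abs two_pi_nn).trans ?_
    apply intervalIntegral.integral_mono_on two_pi_nn (ii (by fun_prop)) (ii (by fun_prop))
    intro x hx
    rw [abs_mul]
    nlinarith [phi_abs x, abs_nonneg (f x)]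
  set S := ∫ x in (0:ℝ)..(2 * π), |f x|
  set E := ∫ x in (0:ℝ)..(2 * π), f x ^ 2
  have h2 : 9 * |A| ≤ 2 * S := by
    rw [abs_mul, abs_of_pos (by positivity)] at h1
    nlinarith [pi_gt_three, abs_nonneg A]
  rw [← sq_abs]
  nlinarith [abs_nonneg A]

lemma compare {f : ℝ → ℝ} (h0 : ContinuousOn f (Icc 0 (2 * π))) {A : ℝ} (hA : |A| ≤ 1 / 100000) :
    (∫ x in (0:ℝ)..(2 * π), (f x - A * phi x - A ^ 2 * psi x) ^ 2)
      ≤ 2 * (∫ x in (0:ℝ)..(2 * π), f x ^ 2) + 126 * A ^ 2 ∧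
    (∫ x in (0:ℝ)..(2 * π), f x ^ 2)
      ≤ 2 * (∫ x in (0:ℝ)..(2 * π), (f x - A * phi x - A ^ 2 * psi x) ^ 2) + 126 * A ^ 2 := by
  have gen : ∀ u g : ℝ → ℝ, ContinuousOn u (Icc 0 (2 * π)) → ContinuousOn g (Icc 0 (2 * π)) →
      (∀ x ∈ Icc 0 (2 * π), (u x - g x) ^ 2 ≤ 9 * A ^ 2) →
      (∫ x in (0:ℝ)..(2 * π), u x ^ 2) ≤ 2 * (∫ x in (0:ℝ)..(2 * π), g x ^ 2) + 126 * A ^ 2 := by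
    intro u g hu hg h
    have : (∫ x in (0:ℝ)..(2 * π), u x ^ 2) ≤ ∫ x in (0:ℝ)..(2 * π), (2 * g x ^ 2 + 18 * A ^ 2) := by
      apply intervalIntegral.integral_mono_on two_pi_nn (ii (by fun_prop)) (ii (by fun_prop))
      intro x hx
      nlinarith [h x hx, sq_nonneg (u x - 2 * g x)]
    rw [intervalIntegral.integral_add (ii (by fun_prop)) (ii (by fun_prop)),
      intervalIntegral.integral_const_mul] at this
    simp only [intervalIntegral.integral_const, smul_eq_mul, sub_zero] at this
    nlinarith [two_pi_le, sq_nonneg A]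
  constructor
  · apply gen _ _ (by fun_prop) h0
    intro x hx
    have := corr_abs hA hx
    nlinarith
  · apply gen _ _ h0 (by fun_prop)
    intro x hx
    have := corr_abs hA hx
    nlinarith

lemma lyap {f f1 f2 f3 : ℝ → ℝ} (p : Prof (2 * π) f f1 f2 f3) {A a : ℝ}
    (hA : ∫ x in (0:ℝ)..(2 * π), f x * phi x = 3 * π * A)
    (ha : ∫ x in (0:ℝ)..(2 * π), f x ^ 2 * sin x = 6 * π * a)
    (hE : ∫ x in (0:ℝ)..(2 * π), f x ^ 2 ≤ 1 / 10 ^ 12) :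
    |A| ≤ 1 / 100000 ∧
    ∫ x in (0:ℝ)..(2 * π), (2 * f x * (-(f1 x + f x * f1 x + f3 x)) +
      2 * (1 + x) * (f x - A * phi x - A ^ 2 * psi x) *
      (-(f1 x + f x * f1 x + f3 x) - a * (phi x + 2 * A * psi x)))
    ≤ -(A ^ 4 + 1 / 16 * ∫ x in (0:ℝ)..(2 * π), (f x - A * phi x - A ^ 2 * psi x) ^ 2) := by
  have h0 := p.c0
  have h1 := p.c1
  have h3 := p.c3
  have hA2 := coef_sq h0 hA
  have hA1 : |A| ≤ 1 / 100000 := by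
    apply abs_le_of_sq_le_sq _ (by norm_num)
    norm_num at hE ⊢
    linarith
  refine ⟨hA1, ?_⟩
  obtain ⟨hc1, hc2⟩ := compare h0 hA1
  have q := p.corr A
  have hl := l1sq q.c0
  have hcore := core q (A := A) (a := a) hA1 ?_ ?_ ?_
  · have e1 : ∀ x, f x - A * phi x - A ^ 2 * psi x + A * phi x + A ^ 2 * psi x = f x := fun x => by ring
    have e2 : ∀ x, f1 x - A * sin x - A ^ 2 * psi1 x + A * sin x + A ^ 2 * psi1 x = f1 x := fun x => by ring
    have e3 : ∀ x, f3 x - A * -sin x - A ^ 2 * psi3 x + A * -sin x + A ^ 2 * psi3 x = f3 x := fun x => by ring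
    simp only [e1, e2, e3] at hcore
    rw [intervalIntegral.integral_add (ii (by fun_prop)) (ii (by fun_prop)),
      energy_spatial two_pi_nn p]
    have e4 : psi1 0 = -π := by simp [psi1]; ring
    rw [e4] at hcore
    simp only [sin_zero] at hcore
    have hp9 : 9 * A ^ 4 ≤ π ^ 2 * A ^ 4 := by
      have : 0 ≤ A ^ 4 := by positivity
      have := pi_gt_three
      gcongr
      nlinarith
    have : 0 ≤ A ^ 4 := by positivity
    nlinarith [sq_nonneg (2 * f1 0 + π * A ^ 2)]
  · rw [← ha]
    apply intervalIntegral.integral_congr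
    intro x _
    simp only
    ring
  · have e : ∀ x, (f x - A * phi x - A ^ 2 * psi x) * phi x =
      f x * phi x - A * (phi x * phi x) - A ^ 2 * (psi x * phi x) := fun x => by ring
    simp only [e]
    rw [intervalIntegral.integral_sub (ii (by fun_prop)) (ii (by fun_prop)),
      intervalIntegral.integral_sub (ii (by fun_prop)) (ii (by fun_prop)), hA,
      intervalIntegral.integral_const_mul, intervalIntegral.integral_const_mul, int_phi_sq, int_psi_phi]
    ring
  · apply le_of_sq_le_sq _ (by norm_num)
    norm_num at hE ⊢
    nlinarith

lemma phi_spatial {f f1 f2 f3 : ℝ → ℝ} (p : Prof (2 * π) f f1 f2 f3) :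
    ∫ x in (0:ℝ)..(2 * π), phi x * (-(f1 x + f x * f1 x + f3 x))
      = 1 / 2 * ∫ x in (0:ℝ)..(2 * π), f x ^ 2 * sin x := by
  have h0 := p.c0
  have h1 := p.c1
  have h2 := p.c2
  have h3 := p.c3
  rw [← intervalIntegral.integral_const_mul, flux_eq (F := fun x => -(f x * phi x)
      - 1 / 2 * (f x ^ 2 * phi x) - f2 x * phi x + f1 x * sin x - f x * cos x)
    (F' := fun x => phi x * (-(f1 x + f x * f1 x + f3 x)) - 1 / 2 * (f x ^ 2 * sin x))
    (R := fun x => 1 / 2 * (f x ^ 2 * sin x)) two_pi_nn (by fun_prop) (by fun_prop) (by fun_prop)]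
  · simp [p.b0, p.bL, phi]
  · intro x hx
    have d0 := p.d0 x hx
    have d1 := p.d1 x hx
    have d2 := p.d2 x hx
    refine HasDerivAt.congr_deriv (((((d0.mul (phi_d x)).neg.sub
      (((d0.pow 2).mul (phi_d x)).const_mul (1/2))).sub (d2.mul (phi_d x))).add
      (d1.mul (hasDerivAt_sin x))).sub (d0.mul (hasDerivAt_cos x))) ?_
    simp only [Pi.pow_apply]
    push_cast
    ring
  · intro x _; ring

lemma two_pi_le7 : 2 * π ≤ 7 := two_pi_le.trans (by norm_num)

/-- The coefficient along the uncontrollable direction. -/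
noncomputable def coefA (y : ℝ → ℝ → ℝ) (t : ℝ) : ℝ :=
  (∫ x in (0:ℝ)..(2 * π), y t x * phi x) / (3 * π)

noncomputable def coefB (y : ℝ → ℝ → ℝ) (t : ℝ) : ℝ :=
  (∫ x in (0:ℝ)..(2 * π), y t x ^ 2 * sin x) / (6 * π)

section
variable {y y1 y2 y3 v : ℝ → ℝ → ℝ}

lemma Sol.jcI (S : Sol (2 * π) y y1 y2 y3 v) {p q : ℝ} (hp : 0 ≤ p) :
    ContinuousOn (fun z : ℝ × ℝ => y z.1 z.2) (Icc p q ×ˢ Icc 0 (2 * π)) :=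
  S.jc.mono (prod_mono_left (fun _ hs => hp.trans hs.1))

lemma Sol.coefA_c (S : Sol (2 * π) y y1 y2 y3 v) {p q : ℝ} (hp : 0 ≤ p) :
    ContinuousOn (coefA y) (Icc p q) := by
  have h := cont_int (f := fun s x => y s x * phi x) two_pi_nn
    ((S.jcI (q := q) hp).mul (phi_c.comp continuous_snd).continuousOn)
  exact h.div_const _

lemma Sol.coefB_c (S : Sol (2 * π) y y1 y2 y3 v) {p q : ℝ} (hp : 0 ≤ p) :
    ContinuousOn (coefB y) (Icc p q) := by
  have h := cont_int (f := fun s x => y s x ^ 2 * sin x) two_pi_nn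
    (((S.jcI (q := q) hp).pow 2).mul (continuous_sin.comp continuous_snd).continuousOn)
  exact h.div_const _

lemma Sol.coefA_int (S : Sol (2 * π) y y1 y2 y3 v) {p q : ℝ} (hp : 0 < p) (hpq : p ≤ q) :
    coefA y q - coefA y p = ∫ s in p..q, coefB y s := by
  obtain ⟨C, hC⟩ := S.bdd two_pi_nn two_pi_le7 (q := q) hp
  have hpos : ∀ s ∈ Icc p q, 0 < s := fun s hs => hp.trans_le hs.1
  have h := fub (f := fun s x => y s x * phi x) (g := fun s x => phi x * v s x)
    (C := 2 * (2 * π + C)) hpq two_pi_nn ?_ ?_ ?_ ?_ ?_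
  · replace h := h.2
    have e : ∀ s ∈ uIcc p q, ∫ x in (0:ℝ)..(2 * π), phi x * v s x = 3 * π * coefB y s := by
      intro s hs
      rw [uIcc_of_le hpq] at hs
      rw [S.hv, phi_spatial (S.prof s (hpos s hs)), coefB]
      field_simp
      ring
    rw [intervalIntegral.integral_congr e, intervalIntegral.integral_const_mul] at h
    unfold coefA
    rw [← sub_div, h]
    field_simp
  · intro x hx
    exact continuousOn_const.mul ((S.ct x hx).mono hpos)
  · intro s hs
    have := S.vc (hpos s hs)
    fun_prop
  · intro x hx s hs
    refine HasDerivAt.congr_deriv ((S.dt s (hpos s hs) x hx).mul_const (phi x)) ?_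
    ring
  · intro s hs
    have hv := S.vc (hpos s hs)
    have : ∫ x in (0:ℝ)..(2 * π), |phi x * v s x| ≤ ∫ x in (0:ℝ)..(2 * π), 2 * (1 + v s x ^ 2) := by
      apply intervalIntegral.integral_mono_on two_pi_nn (ii (by fun_prop)) (ii (by fun_prop))
      intro x hx
      rw [abs_mul]
      have b4 : |v s x| ≤ 1 + v s x ^ 2 := by
        rw [abs_le]
        constructor <;> nlinarith [sq_nonneg (v s x - 1), sq_nonneg (v s x + 1)]
      have := phi_abs x
      gcongr
    refine this.trans ?_
    rw [intervalIntegral.integral_const_mul,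
      intervalIntegral.integral_add (ii (by fun_prop)) (ii (by fun_prop))]
    have := hC s hs
    simp only [intervalIntegral.integral_const, smul_eq_mul, sub_zero, mul_one]
    gcongr
  · intro s hs
    have := slice_cont S.jc (s := s) (hpos s hs).le
    fun_prop

lemma Sol.coefA_d (S : Sol (2 * π) y y1 y2 y3 v) {t : ℝ} (ht : 0 < t) :
    HasDerivAt (coefA y) (coefB y t) t := by
  have hbc : ContinuousOn (coefB y) (Ioi 0) := by
    intro s hs
    have hs : 0 < s := hs
    exact ((S.coefB_c (p := s / 2) (q := s + 1) (by positivity)).continuousAt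
      (Icc_mem_nhds (by linarith) (by linarith))).continuousWithinAt
  have h1 : HasDerivAt (fun u => ∫ s in (t / 2)..u, coefB y s) (coefB y t) t := by
    apply intervalIntegral.integral_hasDerivAt_right
    · exact (S.coefB_c (by positivity)).intervalIntegrable_of_Icc (by linarith)
    · exact hbc.stronglyMeasurableAtFilter isOpen_Ioi t ht
    · exact hbc.continuousAt (Ioi_mem_nhds ht)
  refine (h1.const_add (coefA y (t / 2))).congr_of_eventuallyEq ?_
  filter_upwards [Ioi_mem_nhds (show t / 2 < t by linarith)] with u hu
  rw [← S.coefA_int (by positivity) (le_of_lt hu)]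
  ring

lemma Sol.lyap_time (S : Sol (2 * π) y y1 y2 y3 v)
    (hE : ∀ t, 0 < t → ∫ x in (0:ℝ)..(2 * π), y t x ^ 2 ≤ 1 / 10 ^ 12) {c t : ℝ} (ht : 1 < t)
    (hc : ∀ s, 0 < s → c ≤ (coefA y s) ^ 4 + 1 / 16 * ∫ x in (0:ℝ)..(2 * π),
        (y s x - coefA y s * phi x - (coefA y s) ^ 2 * psi x) ^ 2) :
    c * (t - 1) ≤ ∫ x in (0:ℝ)..(2 * π), (y 1 x ^ 2 + (1 + x) *
      (y 1 x - coefA y 1 * phi x - (coefA y 1) ^ 2 * psi x) ^ 2) := by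
  set K : Set (ℝ × ℝ) := Icc 1 t ×ˢ Icc 0 (2 * π) with hK
  have hy : ContinuousOn (fun z : ℝ × ℝ => y z.1 z.2) K := S.jcI zero_le_one
  have hmap : MapsTo (Prod.fst : ℝ × ℝ → ℝ) K (Icc 1 t) := fun z hz => hz.1
  have hac0 := S.coefA_c (p := 1) (q := t) zero_le_one
  have hbc0 := S.coefB_c (p := 1) (q := t) zero_le_one
  have hac : ContinuousOn (fun z : ℝ × ℝ => coefA y z.1) K := hac0.comp continuousOn_fst hmap
  have hbc : ContinuousOn (fun z : ℝ × ℝ => coefB y z.1) K := hbc0.comp continuousOn_fst hmap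
  have j1 : ∀ Y a : ℝ × ℝ → ℝ, ContinuousOn Y K → ContinuousOn a K →
    ContinuousOn (fun z => 2 * Y z + 2 * (1 + z.2) * (Y z - a z * phi z.2 - a z ^ 2 * psi z.2)) K := by
    intro Y a hY ha; fun_prop
  have j2 : ∀ Y a b : ℝ × ℝ → ℝ, ContinuousOn Y K → ContinuousOn a K → ContinuousOn b K →
    ContinuousOn (fun z => 2 * (1 + z.2) * (Y z - a z * phi z.2 - a z ^ 2 * psi z.2) *
      (b z * (phi z.2 + 2 * a z * psi z.2))) K := by
    intro Y a b hY ha hb; fun_prop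
  have j3 : ∀ Y a : ℝ × ℝ → ℝ, ContinuousOn Y K → ContinuousOn a K →
    ContinuousOn (fun z => Y z ^ 2 + (1 + z.2) * (Y z - a z * phi z.2 - a z ^ 2 * psi z.2) ^ 2) K := by
    intro Y a hY ha; fun_prop
  obtain ⟨Y1, hY10, hY1⟩ := bdd_of_cont (f := fun s x => 2 * y s x + 2 * (1 + x) *
    (y s x - coefA y s * phi x - coefA y s ^ 2 * psi x)) (j1 _ _ hy hac)
  obtain ⟨Y2, hY20, hY2⟩ := bdd_of_cont (f := fun s x => 2 * (1 + x) *
    (y s x - coefA y s * phi x - coefA y s ^ 2 * psi x) *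
    (coefB y s * (phi x + 2 * coefA y s * psi x))) (j2 _ _ _ hy hac hbc)
  have hpos : ∀ s ∈ Ioc 1 t, 0 < s := fun s hs => zero_lt_one.trans hs.1
  have key := fub_open (a := 1) (t2 := t) (L := 2 * π) (B := Y1 + Y2) (c := -c)
    (f := fun s x => y s x ^ 2 + (1 + x) * (y s x - coefA y s * phi x - coefA y s ^ 2 * psi x) ^ 2)
    (g := fun s x => 2 * y s x * v s x +
      2 * (1 + x) * (y s x - coefA y s * phi x - coefA y s ^ 2 * psi x) *
      (v s x - coefB y s * (phi x + 2 * coefA y s * psi x)))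
    (q := fun s x => v s x ^ 2) ht two_pi_nn ?_ ?_ ?_ ?_ ?_ ?_ ?_ (j3 _ _ hy hac) ?_
  · have : 0 ≤ ∫ x in (0:ℝ)..(2 * π), (y t x ^ 2 + (1 + x) *
      (y t x - coefA y t * phi x - (coefA y t) ^ 2 * psi x) ^ 2) := by
      apply intervalIntegral.integral_nonneg two_pi_nn
      intro x hx
      have := hx.1
      positivity
    linarith
  · intro x hx
    have k1 : ContinuousOn (fun s => y s x) (Ioc 1 t) :=
      (slice_cont' S.jc (Ioo_subset_Icc_self hx)).mono (fun s hs => (hpos s hs).le)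
    have k2 : ContinuousOn (fun s => v s x) (Ioc 1 t) := (S.ct x hx).mono hpos
    have k3 : ContinuousOn (coefA y) (Ioc 1 t) := hac0.mono Ioc_subset_Icc_self
    have k4 : ContinuousOn (coefB y) (Ioc 1 t) := hbc0.mono Ioc_subset_Icc_self
    generalize coefA y = a at *
    generalize coefB y = b at *
    fun_prop
  · intro s hs
    have k1 := slice_cont S.jc (s := s) (hpos s hs).le
    have k2 := S.vc (hpos s hs)
    fun_prop
  · intro x hx s hs
    have d := S.dt s (hpos s hs) x hx
    have dA := S.coefA_d (hpos s hs)
    have dw := (d.sub (dA.mul_const (phi x))).sub ((dA.pow 2).mul_const (psi x))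
    refine HasDerivAt.congr_deriv ((d.pow 2).add ((dw.pow 2).const_mul (1 + x))) ?_
    simp only [Pi.sub_apply, Pi.pow_apply]
    push_cast
    ring
  · intro s hs
    have k2 := S.vc (hpos s hs)
    fun_prop
  · positivity
  · intro s hs x hx
    have b1 := hY1 s (Ioc_subset_Icc_self hs) x hx
    have b2 := hY2 s (Ioc_subset_Icc_self hs) x hx
    have b4 : |v s x| ≤ 1 + v s x ^ 2 := by
      rw [abs_le]
      constructor <;> nlinarith [sq_nonneg (v s x - 1), sq_nonneg (v s x + 1)]
    have e : 2 * y s x * v s x +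
      2 * (1 + x) * (y s x - coefA y s * phi x - coefA y s ^ 2 * psi x) *
      (v s x - coefB y s * (phi x + 2 * coefA y s * psi x)) =
      (2 * y s x + 2 * (1 + x) * (y s x - coefA y s * phi x - coefA y s ^ 2 * psi x)) * v s x
      - 2 * (1 + x) * (y s x - coefA y s * phi x - coefA y s ^ 2 * psi x) *
        (coefB y s * (phi x + 2 * coefA y s * psi x)) := by ring
    simp only [e]
    refine (abs_sub _ _).trans ?_
    have : |(2 * y s x + 2 * (1 + x) * (y s x - coefA y s * phi x - coefA y s ^ 2 * psi x)) * v s x|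
      ≤ Y1 * (1 + v s x ^ 2) := by rw [abs_mul]; gcongr
    nlinarith [mul_nonneg hY20 (sq_nonneg (v s x))]
  · intro t1 ht1
    exact S.bdd two_pi_nn two_pi_le7 (zero_lt_one.trans ht1.1)
  · intro s hs
    have hs0 := hpos s hs
    have := (lyap (S.prof s hs0) (A := coefA y s) (a := coefB y s)
      (by unfold coefA; field_simp) (by unfold coefB; field_simp) (hE s hs0)).2
    rw [S.hv]
    exact this.trans (neg_le_neg (hc s hs0))

theorem Sol.tends (S : Sol (2 * π) y y1 y2 y3 v)
    (hE0 : ∫ x in (0:ℝ)..(2 * π), y 0 x ^ 2 ≤ 1 / 10 ^ 12) :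
    Tendsto (fun t => ∫ x in (0:ℝ)..(2 * π), y t x ^ 2) atTop (nhds 0) := by
  have hE : ∀ t, 0 < t → ∫ x in (0:ℝ)..(2 * π), y t x ^ 2 ≤ 1 / 10 ^ 12 := fun t ht =>
    (S.energy two_pi_nn two_pi_le7 le_rfl ht).trans hE0
  have hnn : ∀ t, 0 ≤ ∫ x in (0:ℝ)..(2 * π), y t x ^ 2 := fun t =>
    intervalIntegral.integral_nonneg two_pi_nn (fun x _ => sq_nonneg _)
  rw [Metric.tendsto_atTop]
  intro ε hε
  simp only [dist_zero_right, Real.norm_of_nonneg (hnn _)]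
  by_contra! hcon
  have hlow : ∀ t, 0 < t → ε ≤ ∫ x in (0:ℝ)..(2 * π), y t x ^ 2 := by
    intro t ht
    obtain ⟨s, hs, h⟩ := hcon (t + 1)
    exact h.trans (S.energy two_pi_nn two_pi_le7 ht.le (by linarith))
  set c := min ((ε / 252) ^ 2) (ε / 64) with hc
  have hc0 : 0 < c := by positivity
  have hcc : ∀ s, 0 < s → c ≤ (coefA y s) ^ 4 + 1 / 16 * ∫ x in (0:ℝ)..(2 * π),
        (y s x - coefA y s * phi x - (coefA y s) ^ 2 * psi x) ^ 2 := by
    intro s hs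
    have hA := (lyap (S.prof s hs) (A := coefA y s) (a := coefB y s)
      (by unfold coefA; field_simp) (by unfold coefB; field_simp) (hE s hs)).1
    have hcmp := (compare (S.prof s hs).c0 hA).2
    have hl := hlow s hs
    have hn : 0 ≤ ∫ x in (0:ℝ)..(2 * π), (y s x - coefA y s * phi x - (coefA y s) ^ 2 * psi x) ^ 2 :=
      intervalIntegral.integral_nonneg two_pi_nn (fun x _ => sq_nonneg _)
    set n := ∫ x in (0:ℝ)..(2 * π), (y s x - coefA y s * phi x - (coefA y s) ^ 2 * psi x) ^ 2
    rcases le_total (ε / 2) (2 * n) with h | h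
    · have : 0 ≤ (coefA y s) ^ 4 := by positivity
      have := min_le_right ((ε / 252) ^ 2) (ε / 64)
      linarith
    · have h2 : ε / 252 ≤ (coefA y s) ^ 2 := by linarith
      have h3 : (ε / 252) ^ 2 ≤ ((coefA y s) ^ 2) ^ 2 := by gcongr
      have := min_le_left ((ε / 252) ^ 2) (ε / 64)
      have e : ((coefA y s) ^ 2) ^ 2 = (coefA y s) ^ 4 := by ring
      linarith
  have hL0 : 0 ≤ ∫ x in (0:ℝ)..(2 * π), (y 1 x ^ 2 + (1 + x) *
      (y 1 x - coefA y 1 * phi x - (coefA y 1) ^ 2 * psi x) ^ 2) := by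
    apply intervalIntegral.integral_nonneg two_pi_nn
    intro x hx
    have := hx.1
    positivity
  set Λ := ∫ x in (0:ℝ)..(2 * π), (y 1 x ^ 2 + (1 + x) *
      (y 1 x - coefA y 1 * phi x - (coefA y 1) ^ 2 * psi x) ^ 2) with hΛ
  have fin := S.lyap_time hE (t := 1 + (Λ + 1) / c) (by
    have : 0 < (Λ + 1) / c := by positivity
    linarith) hcc
  rw [add_sub_cancel_left, mul_div_cancel₀ _ hc0.ne', ← hΛ] at fin
  linarith
end

lemma iter_d {L : ℝ} {f : ℝ → ℝ} (hL : 0 < L) (h : ContDiffOn ℝ 3 f (Icc 0 L)) {k : ℕ} (hk : k < 3)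
    {x : ℝ} (hx : x ∈ Ioo 0 L) :
    HasDerivAt (iteratedDerivWithin k f (Icc 0 L)) (iteratedDerivWithin (k + 1) f (Icc 0 L) x) x := by
  have hd := h.differentiableOn_iteratedDerivWithin (m := k) (by exact_mod_cast hk) (uniqueDiffOn_Icc hL)
  have := (hd x (Ioo_subset_Icc_self hx)).hasDerivWithinAt
  rw [iteratedDerivWithin_succ]
  exact this.hasDerivAt (Icc_mem_nhds hx.1 hx.2)

lemma sol_of {L : ℝ} {y : ℝ → ℝ → ℝ} (hL : 0 < L) (h : IsNonlinearKdVSolIci L y) :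
    Sol L y (fun t => iteratedDerivWithin 1 (y t) (Icc 0 L))
      (fun t => iteratedDerivWithin 2 (y t) (Icc 0 L))
      (fun t => iteratedDerivWithin 3 (y t) (Icc 0 L))
      (fun t x => -(iteratedDerivWithin 1 (y t) (Icc 0 L) x
        + y t x * iteratedDerivWithin 1 (y t) (Icc 0 L) x
        + iteratedDerivWithin 3 (y t) (Icc 0 L) x)) := by
  obtain ⟨h1, h2, h3, h4, h5⟩ := h
  have hu := uniqueDiffOn_Icc hL
  have heq : ∀ t, 0 < t → ∀ x ∈ Ioo 0 L, derivWithin (fun s => y s x) (Ici (0:ℝ)) t =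
      -(iteratedDerivWithin 1 (y t) (Icc 0 L) x
        + y t x * iteratedDerivWithin 1 (y t) (Icc 0 L) x
        + iteratedDerivWithin 3 (y t) (Icc 0 L) x) := by
    intro t ht x hx
    have := h4 t ht x hx
    rw [iteratedDerivWithin_one]
    linarith
  refine ⟨?_, fun t => rfl, ?_, ?_, h3⟩
  · intro t ht
    have hc := h1 t ht.le
    obtain ⟨b0, bL, b1⟩ := h5 t ht.le
    refine ⟨hc.continuousOn, hc.continuousOn_iteratedDerivWithin (by norm_num) hu,
      hc.continuousOn_iteratedDerivWithin (by norm_num) hu,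
      hc.continuousOn_iteratedDerivWithin (by norm_num) hu, ?_, ?_, ?_, b0, bL, ?_⟩
    · intro x hx
      have := iter_d hL hc (k := 0) (by norm_num) hx
      rwa [iteratedDerivWithin_zero] at this
    · intro x hx
      exact iter_d hL hc (k := 1) (by norm_num) hx
    · intro x hx
      exact iter_d hL hc (k := 2) (by norm_num) hx
    · simp only [iteratedDerivWithin_one]
      exact b1
  · intro t ht x hx
    rw [← heq t ht x hx]
    exact (((h2 x (Ioo_subset_Icc_self hx)).differentiableOn (by norm_num)) t ht.le).hasDerivWithinAt.hasDerivAt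
      (Ici_mem_nhds ht)
  · intro x hx
    have := ((h2 x (Ioo_subset_Icc_self hx)).continuousOn_derivWithin (uniqueDiffOn_Ici 0) le_rfl).mono
      Ioi_subset_Ici_self
    exact this.congr (fun t ht => (heq t ht x hx).symm)

/-- local asymptotic stability (attractivity) of the origin for the
nonlinear KdV equation at the critical length `L = 2π`: there is `δ₁ > 0` such that
every classical solution with `‖y₀‖_{L²(0,2π)} < δ₁` satisfies
`‖y(t,·)‖_{L²(0,2π)} → 0` as `t → +∞`. -/
theorem nonlinearKdV_asymptotic_stability :
    ∃ δ₁ > 0, ∀ y₀ : ℝ → ℝ, L2norm (2 * Real.pi) y₀ < δ₁ →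
      ∀ y : ℝ → ℝ → ℝ, IsNonlinearKdVSolIci (2 * Real.pi) y →
      (∀ x ∈ Icc (0:ℝ) (2 * Real.pi), y 0 x = y₀ x) →
      Tendsto (fun t => L2norm (2 * Real.pi) (y t)) atTop (nhds 0) := by
  refine ⟨1 / 10 ^ 6, by norm_num, ?_⟩
  intro y₀ h0 y hy hini
  have S := sol_of (by positivity) hy
  have e : ∫ x in (0:ℝ)..(2 * π), y 0 x ^ 2 = ∫ x in (0:ℝ)..(2 * π), y₀ x ^ 2 := by
    apply intervalIntegral.integral_congr
    intro x hx
    rw [uIcc_of_le two_pi_nn] at hx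
    simp only [hini x hx]
  have hE : ∫ x in (0:ℝ)..(2 * π), y 0 x ^ 2 ≤ 1 / 10 ^ 12 := by
    rw [e]
    unfold L2norm at h0
    have := (Real.sqrt_lt' (by norm_num)).1 h0
    norm_num at this ⊢
    exact this.le
  have := (S.tends hE).sqrt
  rw [Real.sqrt_zero] at this
  exact this
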